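/- arXiv:1710.09072 — 4 statements merged into one kernel-verified Lean document; each statement's English description precedes it below -/
import Mathlib

section
/- Let f be an entire function of exponential type σ that is bounded on the real line, and define S_f(x;h) := f(x+h) - f(x) - f'(x)h. Then for all real x, h, h': |S_f(x;h') - S_f(x;h)| ≤ σ²·‖f‖_{L∞(ℝ)}·δ(h,h')·|h'-h|, where δ(h,h') := min(|h|,|h'|) + |h'-h|/2. -/
open Filter Topology Metric Complex

theorem residue_aux (R : ℝ) (hR : 0 < R) (a : ℂ → ℂ) (s : Finset ℂ) :
    ∀ g : ℂ → ℂ, (∀ w ∈ s, w ∈ ball (0:ℂ) R) →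
    (∀ z ∈ closedBall (0:ℂ) R, z ∉ s → DifferentiableAt ℂ g z) →
    (∀ w ∈ s, Tendsto (fun z => (z - w) * g z) (𝓝[≠] w) (𝓝 (a w))) →
    (∮ z in C(0, R), g z) = 2 * Real.pi * I * ∑ w ∈ s, a w := by
  classical
  induction s using Finset.induction_on with
  | empty =>
    intro g _ hd _
    simp only [Finset.sum_empty, mul_zero]
    refine Complex.circleIntegral_eq_zero_of_differentiable_on_off_countable hR.le
      (s := ∅) Set.countable_empty (fun z hz => ?_) (fun z hz => ?_)
    · exact (hd z hz (by simp)).continuousAt.continuousWithinAt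
    · exact hd z (ball_subset_closedBall hz.1) (by simp)
  | insert w t hw ih =>
    intro g hs hd hl
    set g0 : ℂ → ℂ := fun z => g z - a w * (z - w)⁻¹ with hg0
    set g1 : ℂ → ℂ := Function.update g0 w (limUnder (𝓝[≠] w) g0) with hg1
    have hne : ∀ z, z ≠ w → g1 =ᶠ[𝓝 z] g0 := by
      intro z hz
      filter_upwards [isOpen_ne.mem_nhds hz] with y hy
      exact Function.update_of_ne hy _ _
    have hd0 : ∀ z ∈ closedBall (0:ℂ) R, z ∉ insert w t → DifferentiableAt ℂ g0 z := by
      intro z hz hzt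
      have hzw : z - w ≠ 0 := by
        rw [sub_ne_zero]; rintro rfl; simp at hzt
      have := hd z hz hzt
      fun_prop (disch := assumption)
    have hopen : IsOpen (ball (0:ℂ) R \ (t : Set ℂ)) :=
      isOpen_ball.sdiff t.finite_toSet.isClosed
    have hwmem : w ∈ ball (0:ℂ) R \ (t : Set ℂ) := ⟨hs w (by simp), by simpa using hw⟩
    have hdw : DifferentiableAt ℂ g1 w := by
      refine (Complex.differentiableOn_update_limUnder_of_isLittleO
        (hopen.mem_nhds hwmem) ?_ ?_).differentiableAt (hopen.mem_nhds hwmem)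
      · intro z hz
        refine (hd0 z (ball_subset_closedBall hz.1.1) ?_).differentiableWithinAt
        have h1 := hz.1.2
        have h2 := hz.2
        simp at h1 h2 ⊢
        exact ⟨h2, h1⟩
      · rw [Asymptotics.isLittleO_iff_tendsto']
        · have h1 := hl w (by simp)
          have h2 : Tendsto (fun z : ℂ => (z - w) * g0 w) (𝓝[≠] w) (𝓝 0) := by
            refine Tendsto.mono_left ?_ nhdsWithin_le_nhds
            exact Continuous.tendsto' (by fun_prop) _ _ (by simp)
          have h3 := (h1.sub_const (a w)).sub h2
          simp only [sub_self] at h3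
          refine h3.congr' ?_
          filter_upwards [self_mem_nhdsWithin] with z hz
          have hzw : z - w ≠ 0 := sub_ne_zero.2 hz
          simp only [hg0, div_inv_eq_mul]
          field_simp
        · filter_upwards [self_mem_nhdsWithin] with z hz h
          exact absurd (inv_eq_zero.1 h) (sub_ne_zero.2 hz)
    have key := ih g1 (fun v hv => hs v (by simp [hv])) ?_ ?_
    · have e : (∮ z in C(0, R), g1 z) = (∮ z in C(0, R), g z) - a w * (2 * Real.pi * I) := by
        rw [← circleIntegral.integral_sub_inv_of_mem_ball (hs w (by simp)),
          ← circleIntegral.integral_const_mul, ← circleIntegral.integral_sub]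
        · refine circleIntegral.integral_congr hR.le fun z hz => ?_
          refine Function.update_of_ne ?_ _ _
          rintro rfl
          exact (ne_of_mem_of_not_mem hz (by have := hs z (by simp); simp at this ⊢; exact this.ne)) rfl
        · refine ContinuousOn.circleIntegrable hR.le fun z hz => ?_
          refine (hd z (sphere_subset_closedBall hz) fun h => ?_).continuousAt.continuousWithinAt
          have := hs z h; simp at this hz; linarith
        · refine ContinuousOn.circleIntegrable hR.le fun z hz => ?_
          have hzw : z - w ≠ 0 := by
            rw [sub_ne_zero]; rintro rfl
            have := hs z (by simp); simp at this hz; linarith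
          exact ContinuousAt.continuousWithinAt (by fun_prop (disch := assumption))
      rw [Finset.sum_insert hw]
      linear_combination key - e
    · intro z hz hzt
      by_cases h : z = w
      · rw [h]; exact hdw
      · exact (hne z h).differentiableAt_iff.2 (hd0 z hz (by simp [h, hzt]))
    · intro v hv
      have hvw : v ≠ w := by rintro rfl; exact hw hv
      have h1 := hl v (by simp [hv])
      have hvw' : v - w ≠ 0 := sub_ne_zero.2 hvw
      have h2 : Tendsto (fun z : ℂ => (z - v) * (a w * (z - w)⁻¹)) (𝓝[≠] v) (𝓝 0) := by
        refine Tendsto.mono_left ?_ nhdsWithin_le_nhds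
        have : ContinuousAt (fun z : ℂ => (z - v) * (a w * (z - w)⁻¹)) v := by
          fun_prop (disch := assumption)
        simpa [ContinuousAt] using this
      have h3 := h1.sub h2
      rw [sub_zero] at h3
      refine h3.congr' ?_
      filter_upwards [(hne v hvw).filter_mono nhdsWithin_le_nhds] with z hz
      rw [hz]; simp only [hg0]; ring

theorem pl_aux (f : ℂ → ℂ) (σ M : ℝ) (hσ : 0 < σ)
    (hf : Differentiable ℂ f)
    (htype : ∀ ε > (0 : ℝ), ∃ C > (0 : ℝ), ∀ z : ℂ, ‖f z‖ ≤ C * Real.exp ((σ + ε) * ‖z‖))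
    (hM : ∀ x : ℝ, ‖f x‖ ≤ M) (u : ℂ) (hu : u = I ∨ u = -I) (z : ℂ) (hz : 0 ≤ z.re) :
    ‖f (u * z)‖ ≤ M * Real.exp (σ * z.re) := by
  have key : ∀ ε > (0:ℝ), ‖f (u * z)‖ ≤ M * Real.exp ((σ + ε) * z.re) := by
    intro ε hε
    obtain ⟨C, hC, hb⟩ := htype ε hε
    have nu : ‖u‖ = 1 := by rcases hu with rfl | rfl <;> simp
    have hn : ∀ w : ℂ, ‖exp (-((σ + ε : ℝ) : ℂ) * w)‖ = Real.exp (-(σ+ε) * w.re) := by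
      intro w; rw [Complex.norm_exp]; congr 1
      rw [← ofReal_neg, Complex.re_ofReal_mul]
    have := PhragmenLindelof.right_half_plane_of_bounded_on_real
      (f := fun w => f (u * w) * exp (-((σ + ε : ℝ) : ℂ) * w)) (C := M) (z := z) ?_ ?_ ?_ ?_ hz
    · rw [norm_mul, hn] at this
      have h2 := mul_le_mul_of_nonneg_right this (Real.exp_pos ((σ + ε) * z.re)).le
      rwa [mul_assoc, ← Real.exp_add, neg_mul, neg_add_cancel, Real.exp_zero, mul_one] at h2
    · exact Differentiable.diffContOnCl (by fun_prop)
    · refine ⟨1, by norm_num, σ + ε, Asymptotics.IsBigO.of_bound C ?_⟩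
      refine Filter.eventually_inf_principal.2 (Eventually.of_forall fun w hw => ?_)
      rw [norm_mul, hn, Real.rpow_one, Real.norm_of_nonneg (Real.exp_pos _).le]
      have h1 := hb (u * w)
      rw [norm_mul, nu, one_mul] at h1
      have h2 : Real.exp (-(σ+ε) * w.re) ≤ 1 := by
        rw [Real.exp_le_one_iff]
        have : 0 < w.re := hw
        nlinarith [mul_pos (add_pos hσ hε) this]
      calc _ ≤ ‖f (u * w)‖ * 1 := by gcongr
        _ ≤ _ := by rw [mul_one]; exact h1
    · refine isBoundedUnder_of_eventually_le (a := C) ?_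
      filter_upwards [eventually_ge_atTop 0] with x hx
      rw [norm_mul, hn]
      have h1 := hb (u * x)
      rw [norm_mul, nu, one_mul, norm_real, Real.norm_of_nonneg hx] at h1
      calc _ ≤ C * Real.exp ((σ + ε) * x) * Real.exp (-(σ+ε) * x) := by
            rw [ofReal_re]; gcongr
        _ = C := by rw [mul_assoc, ← Real.exp_add, neg_mul, add_neg_cancel, Real.exp_zero, mul_one]
    · intro x
      rw [norm_mul, hn]
      have h0 : ((x:ℂ) * I).re = 0 := by simp
      rw [h0, mul_zero, Real.exp_zero, mul_one]
      rcases hu with rfl | rfl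
      · have := hM (-x)
        rwa [show I * ((x:ℂ) * I) = ((-x : ℝ) : ℂ) by
          push_cast; linear_combination (x:ℂ) * I_sq]
      · have := hM x
        rwa [show -I * ((x:ℂ) * I) = (x : ℂ) by linear_combination -(x:ℂ) * I_sq]
  have ht : Tendsto (fun ε : ℝ => M * Real.exp ((σ + ε) * z.re)) (𝓝[>] 0)
      (𝓝 (M * Real.exp (σ * z.re))) := by
    refine Tendsto.mono_left ?_ nhdsWithin_le_nhds
    exact Continuous.tendsto' (by fun_prop) _ _ (by simp)
  exact ge_of_tendsto ht (by filter_upwards [self_mem_nhdsWithin] with ε hε using key ε hε)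

theorem pl (f : ℂ → ℂ) (σ M : ℝ) (hσ : 0 < σ)
    (hf : Differentiable ℂ f)
    (htype : ∀ ε > (0 : ℝ), ∃ C > (0 : ℝ), ∀ z : ℂ, ‖f z‖ ≤ C * Real.exp ((σ + ε) * ‖z‖))
    (hM : ∀ x : ℝ, ‖f x‖ ≤ M) (z : ℂ) :
    ‖f z‖ ≤ M * Real.exp (σ * |z.im|) := by
  rcases le_total 0 z.im with h | h
  · have := pl_aux f σ M hσ hf htype hM I (.inl rfl) (-I * z) (by simpa using h)
    rw [abs_of_nonneg h]
    have e : I * (-I * z) = z := by linear_combination -z * I_sq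
    rw [e] at this
    simpa using this
  · have := pl_aux f σ M hσ hf htype hM (-I) (.inr rfl) (I * z) (by simpa using h)
    rw [abs_of_nonpos h]
    have e : -I * (I * z) = z := by linear_combination -z * I_sq
    rw [e] at this
    simpa using this

theorem cos_lower (n : ℕ) (hn : 0 < n) (z : ℂ) (hz : ‖z‖ = n * Real.pi) :
    Real.exp |z.im| ≤ 4 * ‖cos z‖ := by
  have hsq : ‖cos z‖ ^ 2 = Real.cosh z.im ^ 2 - Real.sin z.re ^ 2 := by
    have e : cos z = ((Real.cos z.re * Real.cosh z.im : ℝ) : ℂ) +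
        ((-(Real.sin z.re * Real.sinh z.im) : ℝ) : ℂ) * I := by
      rw [Complex.cos_eq]; push_cast; ring
    rw [← Complex.normSq_eq_norm_sq, e, Complex.normSq_add_mul_I]
    have h1 := Real.cosh_sq z.im
    have h2 := Real.sin_sq_add_cos_sq z.re
    linear_combination Real.cosh z.im ^ 2 * h2 - Real.sin z.re ^ 2 * h1
  have hc1 : 1 + z.im ^ 2 ≤ Real.cosh z.im ^ 2 := by
    rw [Real.cosh_sq']
    have : |z.im| ≤ |Real.sinh z.im| := by
      rw [Real.abs_sinh]; exact Real.self_le_sinh_iff.2 (abs_nonneg _)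
    have := sq_le_sq.2 this
    linarith
  have hs1 := Real.sin_sq_le_one z.re
  have hpi := Real.pi_gt_three
  have hs : 2 * Real.sin z.re ^ 2 ≤ Real.cosh z.im ^ 2 := by
    by_cases hy : 1 ≤ z.im ^ 2
    · linarith
    · push Not at hy
      have hn1 : (1:ℝ) ≤ n := by exact_mod_cast hn
      have hnp : 3 ≤ n * Real.pi := by nlinarith
      have hns : z.re ^ 2 + z.im ^ 2 = (n * Real.pi) ^ 2 := by
        rw [← hz, ← Complex.normSq_eq_norm_sq, Complex.normSq_apply]; ring
      have hx : |z.re| ^ 2 = z.re ^ 2 := sq_abs _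
      have hx0 := abs_nonneg z.re
      set d := n * Real.pi - |z.re| with hd
      have hdp : d * (n * Real.pi + |z.re|) = z.im ^ 2 := by rw [hd]; nlinarith
      have hd0 : 0 ≤ d := by
        by_contra h; push Not at h
        nlinarith [sq_nonneg z.im]
      have hd1 : d ≤ 1/3 := by nlinarith
      have hsin : Real.sin z.re ^ 2 = Real.sin d ^ 2 := by
        have h1 : Real.sin |z.re| ^ 2 = Real.sin z.re ^ 2 := by
          rcases abs_choice z.re with h | h <;> rw [h] ; simp
        rw [← h1, hd, Real.sin_sub]; simp [Real.sin_nat_mul_pi, mul_pow]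
        have h5 := Real.sin_sq_add_cos_sq (n * Real.pi)
        rw [Real.sin_nat_mul_pi] at h5
        linear_combination -Real.sin |z.re| ^ 2 * h5
      have : Real.sin d ^ 2 ≤ d ^ 2 := by
        rw [sq_le_sq]; exact Real.abs_sin_le_abs
      nlinarith [sq_nonneg z.im]
  have h2 : Real.cosh z.im ^ 2 ≤ 2 * ‖cos z‖ ^ 2 := by rw [hsq]; linarith
  have h3 : Real.exp |z.im| ≤ 2 * Real.cosh z.im := by
    rw [← Real.cosh_abs, Real.cosh_eq]; have := Real.exp_pos (-|z.im|); linarith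
  have h4 : Real.cosh z.im ≤ 2 * ‖cos z‖ := by
    apply le_of_sq_le_sq _ (by positivity)
    nlinarith [sq_nonneg ‖cos z‖]
  linarith

theorem odd_sum : HasSum (fun k : ℤ => 4 / ((2 * (k:ℝ) + 1) ^ 2 * Real.pi ^ 2)) 1 := by
  have h := hasSum_zeta_two
  have hodd : HasSum (fun k : ℕ => 1 / (2 * (k:ℝ) + 1) ^ 2) (Real.pi ^ 2 / 8) := by
    have he : HasSum (fun k : ℕ => 1 / ((2 * k : ℕ):ℝ) ^ 2) (Real.pi ^ 2 / 24) := by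
      have := h.mul_left (1/4)
      have e1 : (fun k : ℕ => 1 / ((2 * k : ℕ):ℝ) ^ 2) = fun k : ℕ => 1 / 4 * (1 / (k:ℝ) ^ 2) := by
        funext k; push_cast; rw [mul_pow, div_mul_div_comm]; norm_num
      rw [e1, show Real.pi ^ 2 / 24 = 1 / 4 * (Real.pi ^ 2 / 6) by ring]
      exact this
    have ho : Summable (fun k : ℕ => 1 / ((2 * k + 1 : ℕ):ℝ) ^ 2) :=
      h.summable.comp_injective (i := fun k : ℕ => 2 * k + 1) (fun a b hab => by simpa using hab)
    have h2 := (he.even_add_odd (f := fun n : ℕ => 1 / (n:ℝ)^2) ho.hasSum).unique h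
    have := ho.hasSum
    rw [show ∑' k : ℕ, 1 / ((2 * k + 1 : ℕ):ℝ) ^ 2 = Real.pi ^ 2 / 8 by linarith] at this
    simpa using this
  have hpi := Real.pi_ne_zero
  have h1 := hodd.mul_left (4 / Real.pi ^ 2)
  have e : (4 / Real.pi ^ 2) * (Real.pi ^ 2 / 8) = 1/2 := by field_simp; norm_num
  rw [e] at h1
  have := HasSum.of_nat_of_neg_add_one
    (f := fun k : ℤ => 4 / ((2 * (k:ℝ) + 1) ^ 2 * Real.pi ^ 2)) (m := 1/2) (m' := 1/2) ?_ ?_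
  · convert this using 1; norm_num
  · refine Eq.subst (motive := fun f : ℕ → ℝ => HasSum f (1/2)) (funext fun k => ?_) h1
    push_cast; rw [div_mul_div_comm, mul_one, mul_comm]
  · refine Eq.subst (motive := fun f : ℕ → ℝ => HasSum f (1/2)) (funext fun k => ?_) h1
    push_cast; rw [div_mul_div_comm, mul_one, mul_comm]; ring_nf

theorem bern0 (φ : ℂ → ℂ) (M : ℝ) (hφ : Differentiable ℂ φ) (h0 : φ 0 = 0)
    (hb : ∀ z, ‖φ z‖ ≤ M * Real.exp |z.im|) : ‖deriv φ 0‖ ≤ M := by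
  classical
  have hM : 0 ≤ M := by
    have := (norm_nonneg _).trans (hb 0)
    simpa using this
  have hpi := Real.pi_pos
  have key : ∀ n : ℕ, 0 < n → ‖deriv φ 0‖ ≤ M + 4 * M / (n * Real.pi) := by
    intro n hn
    have hn' : (0:ℝ) < n := by exact_mod_cast hn
    have hR : 0 < n * Real.pi := by positivity
    set W : ℤ → ℂ := fun k => (((2 * k + 1) * Real.pi / 2 : ℝ) : ℂ) with hW
    have hWinj : Function.Injective W := by
      intro a b hab
      have h1 := ofReal_injective hab
      have h2 : (2 * (a:ℝ) + 1) * Real.pi = (2 * b + 1) * Real.pi := by linarith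
      have h3 := mul_right_cancel₀ hpi.ne' h2
      have : (a:ℝ) = b := by linarith
      exact_mod_cast this
    have hWcos : ∀ k, cos (W k) = 0 := by
      intro k; rw [Complex.cos_eq_zero_iff]; exact ⟨k, by simp [hW]⟩
    have hW0 : ∀ k, W k ≠ 0 := by
      intro k h
      have := hWcos k
      rw [h, cos_zero] at this
      exact one_ne_zero this
    have hWn : ∀ k, ‖W k‖ = |2 * (k:ℝ) + 1| * Real.pi / 2 := by
      intro k; simp only [hW]; rw [norm_real, Real.norm_eq_abs, abs_div, abs_mul, abs_of_pos hpi]; norm_num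
    have hWlt : ∀ k, ‖W k‖ < n * Real.pi ↔ k ∈ Finset.Ico (-(n:ℤ)) n := by
      intro k
      rw [hWn, Finset.mem_Ico, show |2 * (k:ℝ) + 1| * Real.pi / 2 = (|2 * (k:ℝ) + 1| / 2) * Real.pi by ring,
        mul_lt_mul_iff_left₀ hpi, div_lt_iff₀ (by norm_num), abs_lt]
      have : (-(n * 2 : ℝ) < 2 * (k:ℝ) + 1 ∧ 2 * (k:ℝ) + 1 < n * 2) ↔
        (-(n * 2 : ℤ) < 2 * k + 1 ∧ 2 * k + 1 < (n * 2 : ℤ)) := by norm_cast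
      rw [this]; omega
    have hWle : ∀ k, ‖W k‖ ≠ n * Real.pi := by
      intro k
      rw [hWn, show |2 * (k:ℝ) + 1| * Real.pi / 2 = (|2 * (k:ℝ) + 1| / 2) * Real.pi by ring]
      intro h
      have h1 := mul_right_cancel₀ hpi.ne' h
      have h2 : |2 * (k:ℝ) + 1| = 2 * n := by linarith
      have h3 : |2 * k + 1| = 2 * (n:ℤ) := by exact_mod_cast h2
      rcases abs_choice (2 * k + 1) with h | h <;> rw [h] at h3 <;> omega
    set T : Finset ℂ := (Finset.Ico (-(n:ℤ)) n).image W with hT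
    set a : ℂ → ℂ := fun w => if w = 0 then deriv φ 0 else φ w / w ^ 2 * (-sin w)⁻¹ with ha
    have h0T : (0:ℂ) ∉ T := by
      simp only [hT, Finset.mem_image, not_exists, not_and]
      exact fun k _ => hW0 k
    have res := residue_aux (n * Real.pi) hR a (insert 0 T) (fun z => φ z / (z ^ 2 * cos z)) ?_ ?_ ?_
    · rw [Finset.sum_insert h0T] at res
      have hI : ‖∮ z in C(0, n * Real.pi), φ z / (z ^ 2 * cos z)‖ ≤
          2 * Real.pi * (n * Real.pi) * (4 * M / (n * Real.pi) ^ 2) := by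
        refine circleIntegral.norm_integral_le_of_norm_le_const hR.le fun z hz => ?_
        have hz' : ‖z‖ = n * Real.pi := by simpa using hz
        have hc := cos_lower n hn z hz'
        have hcp : 0 < ‖cos z‖ := by have := Real.exp_pos |z.im|; linarith
        rw [norm_div, norm_mul, norm_pow, hz', div_le_div_iff₀ (by positivity) (by positivity)]
        have := hb z
        have h5 : ‖φ z‖ ≤ M * (4 * ‖cos z‖) := this.trans (by gcongr)
        calc _ ≤ M * (4 * ‖cos z‖) * (n * Real.pi) ^ 2 := by gcongr
          _ = _ := by ring
      have hS : ‖∑ w ∈ T, a w‖ ≤ M := by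
        rw [hT, Finset.sum_image hWinj.injOn]
        have hterm : ∀ k, ‖a (W k)‖ ≤ M * (4 / ((2 * (k:ℝ) + 1) ^ 2 * Real.pi ^ 2)) := by
          intro k
          simp only [ha, if_neg (hW0 k)]
          have hs : ‖sin (W k)‖ = 1 := by
            have := Complex.sin_sq_add_cos_sq (W k)
            rw [hWcos] at this
            have h6 : ‖sin (W k)‖ ^ 2 = 1 := by
              rw [← norm_pow, show sin (W k) ^ 2 = 1 by linear_combination this, norm_one]
            exact (pow_eq_one_iff_of_nonneg (norm_nonneg _) two_ne_zero).1 h6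
          rw [norm_mul, norm_inv, norm_neg, hs, inv_one, mul_one, norm_div, norm_pow, hWn]
          have h7 : ‖φ (W k)‖ ≤ M := by
            have := hb (W k)
            rwa [show (W k).im = 0 from ofReal_im _, abs_zero, Real.exp_zero, mul_one] at this
          calc _ ≤ M / (|2 * (k:ℝ) + 1| * Real.pi / 2) ^ 2 := by gcongr
            _ = _ := by rw [div_pow, mul_pow, sq_abs, div_div_eq_mul_div, mul_div_assoc]; norm_num
        calc _ ≤ ∑ k ∈ Finset.Ico (-(n:ℤ)) n, M * (4 / ((2 * (k:ℝ) + 1) ^ 2 * Real.pi ^ 2)) :=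
              norm_sum_le_of_le _ fun k _ => hterm k
          _ ≤ M * 1 := by
              rw [← Finset.mul_sum]
              refine mul_le_mul_of_nonneg_left ?_ hM
              exact sum_le_hasSum _ (fun k _ => by positivity) odd_sum
          _ = M := mul_one M
      have ha0 : a 0 = deriv φ 0 := by simp [ha]
      rw [ha0] at res
      rw [res, norm_mul] at hI
      have e : ‖(2 * Real.pi * I : ℂ)‖ = 2 * Real.pi := by
        simp [abs_of_pos hpi]
      rw [e, mul_assoc (2 * Real.pi)] at hI
      have h8 := le_of_mul_le_mul_left hI (by positivity : (0:ℝ) < 2 * Real.pi)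
      have h9 : n * Real.pi * (4 * M / (n * Real.pi) ^ 2) = 4 * M / (n * Real.pi) := by
        field_simp
      rw [h9] at h8
      calc ‖deriv φ 0‖ = ‖(deriv φ 0 + ∑ w ∈ T, a w) - ∑ w ∈ T, a w‖ := by rw [add_sub_cancel_right]
        _ ≤ _ := norm_sub_le _ _
        _ ≤ _ := by linarith
    · intro w hw
      rw [Finset.mem_insert] at hw
      rcases hw with rfl | hw
      · simpa using hR
      · rw [hT, Finset.mem_image] at hw
        obtain ⟨k, hk, rfl⟩ := hw
        simpa using (hWlt k).2 hk
    · intro z hz hzs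
      have hz' : ‖z‖ ≤ n * Real.pi := by simpa using hz
      rw [Finset.mem_insert, not_or] at hzs
      have hc : cos z ≠ 0 := by
        intro hc
        obtain ⟨k, hk⟩ := Complex.cos_eq_zero_iff.1 hc
        have hk' : z = W k := by rw [hk]; simp [hW]
        apply hzs.2
        rw [hT, Finset.mem_image]
        refine ⟨k, (hWlt k).1 ?_, hk'.symm⟩
        rw [← hk']
        exact lt_of_le_of_ne hz' (hk' ▸ hWle k)
      have hd := hφ z
      have hz0 : z ^ 2 * cos z ≠ 0 := mul_ne_zero (pow_ne_zero _ hzs.1) hc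
      fun_prop (disch := assumption)
    · intro w hw
      rw [Finset.mem_insert] at hw
      rcases hw with rfl | hw
      · have h1 := (hφ 0).hasDerivAt.tendsto_slope
        have h2 : Tendsto (fun z : ℂ => (cos z)⁻¹) (𝓝[≠] 0) (𝓝 1) := by
          refine Tendsto.mono_left ?_ nhdsWithin_le_nhds
          have : ContinuousAt (fun z : ℂ => (cos z)⁻¹) 0 :=
            ContinuousAt.inv₀ (by fun_prop) (by simp)
          simpa [ContinuousAt] using this
        have h3 := h1.mul h2
        rw [mul_one] at h3
        simp only [ha, if_true]
        refine h3.congr' ?_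
        filter_upwards [self_mem_nhdsWithin] with z hz
        have hz : z ≠ 0 := hz
        rw [slope_def_field, h0, sub_zero, sub_zero]
        field_simp
      · rw [hT, Finset.mem_image] at hw
        obtain ⟨k, hk, rfl⟩ := hw
        have hs : -sin (W k) ≠ 0 := by
          intro h
          have := Complex.sin_sq_add_cos_sq (W k)
          rw [hWcos, neg_eq_zero.1 h] at this
          norm_num at this
        have h1 := (Complex.hasDerivAt_cos (W k)).tendsto_slope.inv₀ hs
        have h2 : Tendsto (fun z : ℂ => φ z / z ^ 2) (𝓝[≠] (W k)) (𝓝 (φ (W k) / W k ^ 2)) := by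
          refine Tendsto.mono_left ?_ nhdsWithin_le_nhds
          exact ContinuousAt.div hφ.continuous.continuousAt (by fun_prop) (pow_ne_zero _ (hW0 k))
        have h3 := h2.mul h1
        simp only [ha, if_neg (hW0 k)]
        refine h3.congr fun z => ?_
        rw [slope_def_field, hWcos, sub_zero, inv_div, div_mul_div_comm, mul_div_assoc', mul_comm (φ z)]
  have ht : Tendsto (fun n : ℕ => M + 4 * M / (n * Real.pi)) atTop (𝓝 (M + 0)) := by
    refine tendsto_const_nhds.add ?_
    refine Tendsto.div_atTop tendsto_const_nhds ?_
    exact tendsto_natCast_atTop_atTop.atTop_mul_const hpi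
  rw [add_zero] at ht
  exact ge_of_tendsto ht (by filter_upwards [eventually_gt_atTop 0] with n hn using key n hn)

theorem bern (f : ℂ → ℂ) (σ M : ℝ) (hσ : 0 < σ) (hf : Differentiable ℂ f)
    (hb : ∀ z, ‖f z‖ ≤ M * Real.exp (σ * |z.im|)) (z : ℂ) :
    ‖deriv f z‖ ≤ σ * M * Real.exp (σ * |z.im|) := by
  have hM : 0 ≤ M := by
    have := (norm_nonneg _).trans (hb 0)
    simpa using this
  have hσ' : (σ:ℂ) ≠ 0 := by exact_mod_cast hσ.ne'
  set φ : ℂ → ℂ := fun w => (f (z + w / σ) - f (z - w / σ)) / 2 with hφ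
  have hd : HasDerivAt φ (deriv f z / σ) 0 := by
    have hl : HasDerivAt (fun w : ℂ => w / (σ:ℂ)) (1 / σ) 0 := (hasDerivAt_id _).div_const _
    have e1 : HasDerivAt f (deriv f z) (z + 0 / σ) := by simpa using (hf z).hasDerivAt
    have e2 : HasDerivAt f (deriv f z) (z - 0 / σ) := by simpa using (hf z).hasDerivAt
    have h1 := HasDerivAt.comp (0:ℂ) e1 (hl.const_add z)
    have h2 := HasDerivAt.comp (0:ℂ) e2 (hl.const_sub z)
    refine ((h1.sub h2).div_const 2).congr_deriv ?_
    ring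
  have hbd : ∀ w : ℂ, ∀ v : ℂ, (v = w / σ ∨ v = -(w / σ)) →
      ‖f (z + v)‖ ≤ M * Real.exp (σ * |z.im|) * Real.exp |w.im| := by
    intro w v hv
    refine (hb _).trans ?_
    rw [mul_assoc, ← Real.exp_add]
    gcongr
    have : |v.im| = |w.im| / σ := by
      have h1 : (w / σ).im = w.im / σ := Complex.div_ofReal_im _ _
      rcases hv with rfl | rfl
      · rw [h1, abs_div, abs_of_pos hσ]
      · rw [neg_im, abs_neg, h1, abs_div, abs_of_pos hσ]
    calc σ * |(z + v).im| ≤ σ * (|z.im| + |v.im|) := by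
          rw [add_im]; gcongr; exact abs_add_le _ _
      _ = _ := by rw [this]; field_simp
  have h := bern0 φ (M * Real.exp (σ * |z.im|)) (by fun_prop) (by simp [hφ]) ?_
  · rw [hd.deriv, norm_div, norm_real, Real.norm_of_nonneg hσ.le, div_le_iff₀ hσ] at h
    linarith
  · intro w
    have h1 := hbd w _ (.inl rfl)
    have h2 := hbd w _ (.inr rfl)
    rw [← sub_eq_add_neg] at h2
    simp only [hφ]
    rw [norm_div, Complex.norm_two, div_le_iff₀ (by norm_num)]
    refine (norm_sub_le _ _).trans ?_
    linarith

theorem half (f : ℂ → ℂ) (K : ℝ) (hf : Differentiable ℂ f) (hK : 0 ≤ K)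
    (x h h' : ℝ) (hl : ∀ t : ℝ, ‖deriv f ((x:ℂ) + t) - deriv f x‖ ≤ K * |t|) :
    ‖(f ((x : ℂ) + (h' : ℂ)) - f x - deriv f x * h')
          - (f ((x : ℂ) + (h : ℂ)) - f x - deriv f x * h)‖
        ≤ K * (|h| + |h' - h| / 2) * |h' - h| := by
  set d := h' - h with hd
  have := image_norm_le_of_norm_deriv_right_le_deriv_boundary (a := (0:ℝ)) (b := 1)
    (f := fun s : ℝ => f ((x:ℂ) + ((h + s * d : ℝ) : ℂ)) - deriv f x * ((h + s * d : ℝ) : ℂ)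
      - (f ((x : ℂ) + (h : ℂ)) - deriv f x * h))
    (f' := fun s : ℝ => (deriv f ((x:ℂ) + ((h + s * d : ℝ) : ℂ)) - deriv f x) * d)
    (B := fun s => K * |d| * (|h| * s + s ^ 2 / 2 * |d|))
    (B' := fun s => K * |d| * (|h| + s * |d|)) ?_ ?_ ?_ ?_ ?_ (x := 1) (by simp)
  · simp only [one_mul] at this
    rw [show h + d = h' by rw [hd]; ring] at this
    calc _ = ‖f (x + h') - deriv f x * h' - (f (x + h) - deriv f x * h)‖ := by congr 1; ring
      _ ≤ _ := this
      _ = _ := by ring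
  · have := hf.continuous
    fun_prop
  · intro s _
    have hi : HasDerivAt (fun s : ℝ => ((h + s * d : ℝ) : ℂ)) (d : ℂ) s := by
      have : HasDerivAt (fun s : ℝ => h + s * d) d s := by
        simpa using ((hasDerivAt_id s).mul_const d).const_add h
      exact this.ofReal_comp
    have h1 := HasDerivAt.comp_of_eq s (hf ((x:ℂ) + ((h + s * d : ℝ) : ℂ))).hasDerivAt (hi.const_add (x:ℂ)) rfl
    have h2 := ((h1.sub (hi.const_mul (deriv f x))).sub_const (f ((x : ℂ) + (h : ℂ)) - deriv f x * h))
    refine HasDerivAt.hasDerivWithinAt ?_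
    refine h2.congr_deriv ?_
    ring
  · simp
  · intro s
    have := (((hasDerivAt_id s).const_mul |h|).add ((((hasDerivAt_id s).pow 2).div_const 2).mul_const |d|)).const_mul (K * |d|)
    refine this.congr_deriv ?_
    simp
  · intro s hs
    rw [norm_mul, norm_real, Real.norm_eq_abs]
    calc _ ≤ K * |h + s * d| * |d| := by gcongr; exact hl _
      _ ≤ K * (|h| + s * |d|) * |d| := by
        gcongr
        refine (abs_add_le _ _).trans ?_
        rw [abs_mul, abs_of_nonneg hs.1]
      _ = _ := by ring


/-- Let `f` be an entire function of exponential type `σ` bounded on the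
real line by `M`, and let `S_f(x;h) := f(x+h) - f(x) - f'(x)·h`. Then for all real `x, h, h'`:
`|S_f(x;h') - S_f(x;h)| ≤ σ²·M·δ(h,h')·|h'-h|`, where `δ(h,h') = min(|h|,|h'|) + |h'-h|/2`. -/
theorem stmt1 (f : ℂ → ℂ) (σ M : ℝ) (hσ : 0 < σ)
    (hf : Differentiable ℂ f)
    (htype : ∀ ε > (0 : ℝ), ∃ C > (0 : ℝ), ∀ z : ℂ, ‖f z‖ ≤ C * Real.exp ((σ + ε) * ‖z‖))
    (hM : ∀ x : ℝ, ‖f x‖ ≤ M) :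
    ∀ x h h' : ℝ,
      ‖(f ((x : ℂ) + (h' : ℂ)) - f x - deriv f x * h')
          - (f ((x : ℂ) + (h : ℂ)) - f x - deriv f x * h)‖
        ≤ σ ^ 2 * M * (min |h| |h'| + |h' - h| / 2) * |h' - h| := by
  intro x h h'
  have h1 := pl f σ M hσ hf htype hM
  have h2 := bern f σ M hσ hf h1
  have hf' : Differentiable ℂ (deriv f) := hf.contDiff.differentiable_deriv_two
  have h3 := bern (deriv f) σ (σ * M) hσ hf' h2
  have hM0 : 0 ≤ M := (norm_nonneg _).trans (hM 0)
  have hK : 0 ≤ σ ^ 2 * M := by positivity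
  have hl : ∀ t : ℝ, ‖deriv f ((x:ℂ) + t) - deriv f x‖ ≤ σ ^ 2 * M * |t| := by
    intro t
    have hconv : Convex ℝ {z : ℂ | z.im = 0} := convex_hyperplane (Complex.imLm.isLinear) 0
    have := hconv.norm_image_sub_le_of_norm_deriv_le (f := deriv f) (C := σ ^ 2 * M)
      (x := (x:ℂ)) (y := (x:ℂ) + t) (fun z _ => hf' z) ?_ (by simp) (by simp)
    · simpa using this
    · intro z hz
      have h4 := h3 z
      have hz : z.im = 0 := hz
      rw [hz, abs_zero, mul_zero, Real.exp_zero, mul_one] at h4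
      linarith
  rcases le_total |h| |h'| with hh | hh
  · rw [min_eq_left hh]
    exact half f _ hf hK x h h' hl
  · rw [min_eq_right hh, norm_sub_rev, abs_sub_comm]
    exact half f _ hf hK x h' h hl
end

section
/- Let E be a complex Banach space and F: ℂ → E an entire E-valued function of exponential type σ with sup_{x∈ℝ}‖F(x)‖ < ∞. Then sup_{x∈ℝ}‖F'(x)‖ ≤ σ·sup_{x∈ℝ}‖F(x)‖. -/
open Complex Metric Set Filter Topology in
theorem bern_factor (D : ℂ → ℂ) (hD : Differentiable ℂ D) (S : Finset ℂ)
    (hS : ∀ a ∈ S, D a = 0) :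
    ∃ c : ℂ → ℂ, Differentiable ℂ c ∧ ∀ z, D z = (∏ a ∈ S, (z - a)) * c z := by
  classical
  induction S using Finset.induction_on with
  | empty => exact ⟨D, hD, by simp⟩
  | insert a S ha ih =>
    obtain ⟨c, hc, h⟩ := ih (fun b hb => hS b (Finset.mem_insert_of_mem hb))
    have hca : c a = 0 := by
      have h1 := hS a (Finset.mem_insert_self _ _)
      rw [h a] at h1
      rcases mul_eq_zero.1 h1 with h2 | h2
      · rw [Finset.prod_eq_zero_iff] at h2
        obtain ⟨b, hb, hb2⟩ := h2
        rw [sub_eq_zero] at hb2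
        exact absurd (hb2 ▸ hb) ha
      · exact h2
    refine ⟨dslope c a, ?_, ?_⟩
    · rw [← differentiableOn_univ] at hc ⊢
      exact (Complex.differentiableOn_dslope univ_mem).2 hc
    · intro z
      have := sub_smul_dslope c a z
      rw [hca, sub_zero, smul_eq_mul] at this
      rw [h z, Finset.prod_insert ha, ← this]
      ring

open Complex Metric Set Filter Topology in
theorem bern_residue (D g : ℂ → ℂ) (hD : Differentiable ℂ D) (hg : Differentiable ℂ g)
    (S : Finset ℂ) (hne : S.Nonempty) (R : ℝ) (hR : 0 ≤ R)
    (hS : ∀ z, z ∈ S ↔ z ∈ closedBall (0 : ℂ) R ∧ D z = 0)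
    (hb : ∀ z ∈ sphere (0 : ℂ) R, D z ≠ 0)
    (D' : ℂ → ℂ) (hD' : ∀ z ∈ S, HasDerivAt D (D' z) z) (hD'0 : ∀ z ∈ S, D' z ≠ 0) :
    (∮ z in C(0, R), g z / D z) = (2 * Real.pi * I) * ∑ a ∈ S, g a / D' a := by
  classical
  obtain ⟨c, hc, h⟩ := bern_factor D hD S (fun a ha => ((hS a).1 ha).2)
  have hder : ∀ a ∈ S, D' a = (∏ b ∈ S.erase a, (a - b)) * c a := by
    intro a ha
    have h1 : D = fun z => (z - a) * ((∏ b ∈ S.erase a, (z - b)) * c z) := by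
      ext z
      rw [h z, ← Finset.mul_prod_erase S _ ha]
      ring
    have h2 : DifferentiableAt ℂ (fun z => ((∏ b ∈ S.erase a, (z - b)) * c z)) a := by
      have := hc a
      fun_prop
    have h3 := ((hasDerivAt_id a).sub_const a).mul h2.hasDerivAt
    have h4 := hD' a ha
    rw [h1] at h4
    have := h4.unique h3
    simpa using this
  have hc0 : ∀ z ∈ closedBall (0 : ℂ) R, c z ≠ 0 := by
    intro z hz h0
    by_cases hzS : z ∈ S
    · exact hD'0 z hzS (by rw [hder z hzS, h0, mul_zero])
    · exact hzS ((hS z).2 ⟨hz, by rw [h z, h0, mul_zero]⟩)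
  have hdiff : DifferentiableOn ℂ (fun z => g z / c z) (closedBall 0 R) :=
    hg.differentiableOn.div hc.differentiableOn hc0
  have hball : ∀ a ∈ S, a ∈ ball (0 : ℂ) R := by
    intro a ha
    have := (hS a).1 ha
    rw [← sphere_union_ball] at this
    rcases this.1 with h1 | h1
    · exact absurd this.2 (hb a h1)
    · exact h1
  have heq : EqOn (fun z => g z / D z)
      (fun z => ∑ a ∈ S, Lagrange.nodalWeight S id a * ((z - a)⁻¹ • (g z / c z))) (sphere 0 R) := by
    intro z hz
    have hzS : ∀ a ∈ S, z ≠ id a := by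
      rintro a ha rfl
      exact hb _ hz ((hS _).1 ha).2
    have h1 := congrArg (Polynomial.eval z) (Lagrange.sum_basis (s := S) (v := (id : ℂ → ℂ)) (injOn_id _) hne)
    rw [Polynomial.eval_finsetSum, Polynomial.eval_one] at h1
    rw [Finset.sum_congr rfl (fun i hi => Lagrange.eval_basis_not_at_node hi (hzS i hi)),
      ← Finset.mul_sum, Lagrange.eval_nodal] at h1
    have h2 : (∏ a ∈ S, (z - a)) ≠ 0 := by
      rw [Finset.prod_ne_zero_iff]
      exact fun a ha => sub_ne_zero.2 (hzS a ha)
    have h3 := hc0 z (sphere_subset_closedBall hz)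
    simp only [id, smul_eq_mul] at h1 ⊢
    have h4 : ∑ a ∈ S, Lagrange.nodalWeight S (id : ℂ → ℂ) a * ((z - a)⁻¹ * (g z / c z))
      = (∑ a ∈ S, Lagrange.nodalWeight S (id : ℂ → ℂ) a * ((z - a)⁻¹)) * (g z / c z) := by
      rw [Finset.sum_mul]
      exact Finset.sum_congr rfl (fun _ _ => by ring)
    have h5 : ∑ a ∈ S, Lagrange.nodalWeight S (id : ℂ → ℂ) a * ((z - a)⁻¹) = (∏ a ∈ S, (z - a))⁻¹ := by
      exact eq_inv_of_mul_eq_one_right h1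
    change _ = ∑ a ∈ S, Lagrange.nodalWeight S (id : ℂ → ℂ) a * ((z - a)⁻¹ * (g z / c z))
    rw [h4, h5, h z]
    field_simp
  rw [circleIntegral.integral_congr hR heq, circleIntegral.integral_fun_sum]
  · rw [Finset.mul_sum]
    refine Finset.sum_congr rfl (fun a ha => ?_)
    rw [circleIntegral.integral_const_mul, hdiff.circleIntegral_sub_inv_smul (hball a ha), hder a ha,
      Lagrange.nodalWeight, Finset.prod_inv_distrib]
    simp only [id, smul_eq_mul]
    field_simp
  · intro a ha
    apply ContinuousOn.circleIntegrable hR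
    refine continuousOn_const.mul (ContinuousOn.smul (ContinuousOn.inv₀
      (continuousOn_id.sub continuousOn_const) ?_)
      (hdiff.continuousOn.mono sphere_subset_closedBall))
    rintro z hz h0
    change z - a = 0 at h0
    rw [sub_eq_zero] at h0
    exact hb _ hz (h0 ▸ ((hS _).1 ha).2)

open Complex in
theorem bern_cos_lower (N : ℕ) (hN : 1 ≤ N) (z : ℂ) (hz : ‖z‖ = Real.pi * N) :
    Real.exp |z.im| / 8 ≤ ‖Complex.cos z‖ := by
  have hNr : (1 : ℝ) ≤ N := by exact_mod_cast hN
  by_cases hy : 1 ≤ |z.im|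
  · have h1 : Real.exp |z.im| - Real.exp (-|z.im|) ≤ 2 * ‖Complex.cos z‖ := by
      have e1 : ‖Complex.exp (z * I)‖ = Real.exp (-z.im) := by simp [Complex.norm_exp]
      have e2 : ‖Complex.exp (-z * I)‖ = Real.exp (z.im) := by simp [Complex.norm_exp]
      have e3 : 2 * ‖Complex.cos z‖ = ‖Complex.exp (z * I) + Complex.exp (-z * I)‖ := by
        rw [Complex.cos, norm_div]; simp; ring
      rw [e3]
      have e4 := norm_sub_norm_le (Complex.exp (z * I)) (-Complex.exp (-z * I))
      have e5 := norm_sub_norm_le (Complex.exp (-z * I)) (-Complex.exp (z * I))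
      rw [norm_neg, sub_neg_eq_add, e1, e2] at e4 e5
      rw [add_comm] at e5
      rcases abs_cases z.im with ⟨h, _⟩ | ⟨h, _⟩ <;> rw [h]
      · exact e5
      · rw [neg_neg]; exact e4
    have h2 : 2 ≤ Real.exp |z.im| := by
      have := Real.add_one_le_exp |z.im|
      linarith
    have h3 : Real.exp (-|z.im|) ≤ 1 := by
      rw [Real.exp_le_one_iff]; simp
    linarith
  · push Not at hy
    have h1 : ‖Complex.cos z‖ ≥ |Real.cos z.re| := by
      have := Complex.abs_re_le_norm (Complex.cos z)
      have e : (Complex.cos z).re = Real.cos z.re * Real.cosh z.im := by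
        rw [Complex.cos_eq]
        simp [← Complex.ofReal_cos, ← Complex.ofReal_cosh, ← Complex.ofReal_sin, ← Complex.ofReal_sinh]
      rw [e, abs_mul, abs_of_pos (Real.cosh_pos _)] at this
      have h2 := Real.one_le_cosh z.im
      have h3 := abs_nonneg (Real.cos z.re)
      nlinarith
    have hpi := Real.pi_gt_three
    have hx : z.re ^ 2 + z.im ^ 2 = (Real.pi * N) ^ 2 := by
      rw [← hz, Complex.sq_norm, Complex.normSq_apply]; ring
    have hR : 3 ≤ Real.pi * N := by nlinarith
    set R := Real.pi * N with hRdef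
    have hy2 : z.im ^ 2 ≤ 1 := by
      rw [← sq_abs]; nlinarith [abs_nonneg z.im]
    set d := R - |z.re| with hd
    have hd0 : 0 ≤ d := by
      rw [hd, sub_nonneg]
      exact abs_le_of_sq_le_sq (by nlinarith [sq_nonneg z.im]) (by linarith)
    have hd1 : d ≤ 1 / 3 := by
      have : d * (R + |z.re|) = z.im ^ 2 := by
        rw [hd]; nlinarith [sq_abs z.re]
      nlinarith [abs_nonneg z.re]
    have h4 : |Real.cos z.re| = |Real.cos d| := by
      rw [hd, hRdef, mul_comm Real.pi, ← Real.cos_abs z.re, ← Real.cos_neg (N * Real.pi - |z.re|),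
        neg_sub, Real.cos_sub_nat_mul_pi, abs_mul]
      simp
    have h5 := Real.one_sub_sq_div_two_le_cos (x := d)
    have h6 := le_abs_self (Real.cos d)
    have h7 : Real.exp |z.im| ≤ 3 := by
      have := Real.exp_one_lt_d9
      have h8 := Real.exp_le_exp.2 hy.le
      linarith
    nlinarith

open Complex Metric Set Filter Topology in
theorem bern_zeros (N : ℕ) :
    (closedBall (0 : ℂ) (Real.pi * N) ∩ {z | z * Complex.cos z = 0}).Finite := by
  refine Set.Finite.subset (((Set.finite_Icc (-(N : ℤ) - 1) (N + 1)).image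
    (fun k : ℤ => (2 * (k : ℂ) + 1) * Real.pi / 2)).insert 0) ?_
  rintro z ⟨hz, h0⟩
  rcases mul_eq_zero.1 h0 with h | h
  · exact Or.inl h
  · right
    obtain ⟨k, hk⟩ := Complex.cos_eq_zero_iff.1 h
    refine ⟨k, ?_, hk.symm⟩
    have e : ‖z‖ = |2 * (k : ℝ) + 1| * Real.pi / 2 := by
      have : z = ((2 * (k : ℝ) + 1) * Real.pi / 2 : ℝ) := by rw [hk]; push_cast; ring
      rw [this, Complex.norm_real, Real.norm_eq_abs, abs_div, abs_mul, abs_of_pos Real.pi_pos]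
      norm_num
    rw [mem_closedBall_zero_iff, e] at hz
    have hp := Real.pi_pos
    have h1 : |2 * (k : ℝ) + 1| ≤ 2 * N := by
      by_contra hcon
      push Not at hcon
      nlinarith
    rw [abs_le] at h1
    constructor
    · have : (-(N : ℝ) - 1) ≤ k := by linarith
      exact_mod_cast this
    · have : (k : ℝ) ≤ N + 1 := by linarith
      exact_mod_cast this

open Complex Metric Set Filter Topology in
theorem bern_formula (F : ℂ → ℂ) (hF : Differentiable ℂ F) (h0 : F 0 = 0) (M : ℝ)
    (hM : ∀ z, ‖F z‖ ≤ M * Real.exp |z.im|) (N : ℕ) (hN : 1 ≤ N) (S : Finset ℂ)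
    (hS : ∀ z, z ∈ S ↔ z ∈ closedBall (0 : ℂ) (Real.pi * N) ∧ z * Complex.cos z = 0) :
    ‖deriv F 0 - ∑ a ∈ S.erase 0, F a / (a ^ 2 * Complex.sin a)‖ ≤ 8 * M / (Real.pi * N) := by
  have hp := Real.pi_pos
  have hNr : (1 : ℝ) ≤ N := by exact_mod_cast hN
  set R := Real.pi * N with hRdef
  have hR : 0 < R := by positivity
  have hM0 : 0 ≤ M := by
    have := hM 0
    simp [h0] at this
    exact this
  have h0S : (0 : ℂ) ∈ S := by rw [hS]; simp [hR.le]
  have hcos : ∀ a ∈ S.erase 0, a ≠ 0 ∧ Complex.cos a = 0 ∧ Complex.sin a ≠ 0 := by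
    intro a ha
    rw [Finset.mem_erase, hS] at ha
    have h1 : Complex.cos a = 0 := by simpa [ha.1] using ha.2.2
    refine ⟨ha.1, h1, fun h2 => ?_⟩
    have := Complex.sin_sq_add_cos_sq a
    simp [h1, h2] at this
  have hsph : ∀ z ∈ sphere (0 : ℂ) R, z ≠ 0 ∧ 0 < ‖Complex.cos z‖ ∧ Real.exp |z.im| / 8 ≤ ‖Complex.cos z‖ := by
    intro z hz
    rw [mem_sphere_zero_iff_norm] at hz
    have := bern_cos_lower N hN z hz
    refine ⟨?_, lt_of_lt_of_le (by positivity) this, this⟩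
    rw [← norm_pos_iff, hz]; exact hR
  have hds : ∀ z, z ≠ 0 → dslope F 0 z = F z / z := by
    intro z hz
    have := sub_smul_dslope F 0 z
    rw [h0, sub_zero, sub_zero, smul_eq_mul] at this
    rw [← this]; field_simp
  have hres := bern_residue (fun z => z * Complex.cos z) (dslope F 0)
    (by fun_prop) (by
      rw [← differentiableOn_univ] at hF ⊢
      exact (Complex.differentiableOn_dslope univ_mem).2 hF) S ⟨0, h0S⟩ R hR.le hS
    (by
      intro z hz
      obtain ⟨h1, h2, _⟩ := hsph z hz
      exact mul_ne_zero h1 (norm_pos_iff.1 h2))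
    (fun z => Complex.cos z - z * Complex.sin z)
    (by
      intro z _
      have := (hasDerivAt_id z).mul (Complex.hasDerivAt_cos z)
      refine this.congr_deriv ?_
      simp only [id]; ring)
    (by
      intro z hz
      by_cases hz0 : z = 0
      · simp [hz0]
      · obtain ⟨h1, h2, h3⟩ := hcos z (Finset.mem_erase.2 ⟨hz0, hz⟩)
        simp [h1, h2, h3])
  have hint := circleIntegral.norm_integral_le_of_norm_le_const (f := fun z => dslope F 0 z / (z * Complex.cos z))
    (c := 0) (R := R) (C := 8 * M / R ^ 2) hR.le (by
      intro z hz
      obtain ⟨h1, h2, h3⟩ := hsph z hz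
      rw [mem_sphere_zero_iff_norm] at hz
      rw [hds z h1, norm_div, norm_div, norm_mul, hz, div_div, div_le_div_iff₀ (by positivity) (by positivity)]
      have h4 := hM z
      have h5 : ‖F z‖ ≤ 8 * M * ‖Complex.cos z‖ := by nlinarith
      nlinarith [sq_nonneg R, mul_le_mul_of_nonneg_right h5 (sq_nonneg R)])
  rw [hres, ← Finset.add_sum_erase S _ h0S, norm_mul] at hint
  have e1 : ‖(2 * Real.pi * I : ℂ)‖ = 2 * Real.pi := by simp [abs_of_pos hp]
  have e2 : dslope F 0 0 / (Complex.cos 0 - 0 * Complex.sin 0) = deriv F 0 := by simp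
  have e3 : ∑ a ∈ S.erase 0, dslope F 0 a / (Complex.cos a - a * Complex.sin a)
      = - ∑ a ∈ S.erase 0, F a / (a ^ 2 * Complex.sin a) := by
    rw [← Finset.sum_neg_distrib]
    refine Finset.sum_congr rfl (fun a ha => ?_)
    obtain ⟨h1, h2, h3⟩ := hcos a ha
    rw [hds a h1, h2]
    field_simp
    ring
  rw [e1, e2, e3, ← sub_eq_add_neg] at hint
  have e4 : 2 * Real.pi * R * (8 * M / R ^ 2) = 2 * Real.pi * (8 * M / R) := by field_simp
  rw [e4] at hint
  exact le_of_mul_le_mul_left hint (by positivity)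

open Complex Metric Set Filter Topology in
theorem bern_odd (F : ℂ → ℂ) (hF : Differentiable ℂ F) (h0 : F 0 = 0) (M : ℝ)
    (hM : ∀ z, ‖F z‖ ≤ M * Real.exp |z.im|) : ‖deriv F 0‖ ≤ M := by
  have hM0 : 0 ≤ M := by
    have := hM 0
    simp [h0] at this
    exact this
  have hsin : ∀ z, ‖Complex.sin z‖ ≤ 1 * Real.exp |z.im| := by
    intro z
    have e1 : ‖Complex.exp (z * I)‖ = Real.exp (-z.im) := by simp [Complex.norm_exp]
    have e2 : ‖Complex.exp (-z * I)‖ = Real.exp (z.im) := by simp [Complex.norm_exp]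
    have e3 : ‖Complex.sin z‖ = ‖Complex.exp (-z * I) - Complex.exp (z * I)‖ / 2 := by
      rw [Complex.sin, norm_div, norm_mul]; simp
    have e4 := norm_sub_le (Complex.exp (-z * I)) (Complex.exp (z * I))
    rw [e1, e2] at e4
    have e5 := Real.exp_le_exp.2 (le_abs_self z.im)
    have e6 := Real.exp_le_exp.2 (neg_le_abs z.im)
    rw [e3]; linarith
  have key : ∀ N : ℕ, 1 ≤ N → ‖deriv F 0‖ ≤ M + 16 * M / Real.pi / N := by
    intro N hN
    have hp := Real.pi_pos
    have hNr : (1 : ℝ) ≤ N := by exact_mod_cast hN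
    set S := (bern_zeros N).toFinset with hSd
    have hS : ∀ z, z ∈ S ↔ z ∈ closedBall (0 : ℂ) (Real.pi * N) ∧ z * Complex.cos z = 0 := by
      intro z; rw [hSd, Set.Finite.mem_toFinset]; rfl
    have f1 := bern_formula F hF h0 M hM N hN S hS
    have f2 := bern_formula Complex.sin Complex.differentiable_sin Complex.sin_zero 1 hsin N hN S hS
    have hre : ∀ a ∈ S.erase 0, a ≠ 0 ∧ ∃ x : ℝ, a = x ∧ ‖Complex.sin a‖ = 1 := by
      intro a ha
      rw [Finset.mem_erase, hS] at ha
      have h1 : Complex.cos a = 0 := by simpa [ha.1] using ha.2.2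
      refine ⟨ha.1, ?_⟩
      obtain ⟨k, hk⟩ := Complex.cos_eq_zero_iff.1 h1
      refine ⟨(2 * k + 1) * Real.pi / 2, by rw [hk]; push_cast; ring, ?_⟩
      have := Complex.sin_sq_add_cos_sq a
      rw [h1] at this
      have h2 : ‖Complex.sin a‖ ^ 2 = 1 := by
        rw [← norm_pow, show Complex.sin a ^ 2 = 1 by simpa using this, norm_one]
      exact (pow_eq_one_iff_of_nonneg (norm_nonneg _) two_ne_zero).1 h2
    set T := ∑ a ∈ S.erase 0, 1 / ‖a‖ ^ 2 with hT
    have hT1 : ∑ a ∈ S.erase 0, Complex.sin a / (a ^ 2 * Complex.sin a) = (T : ℂ) := by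
      rw [hT, Complex.ofReal_sum]
      refine Finset.sum_congr rfl (fun a ha => ?_)
      obtain ⟨h1, x, h2, h3⟩ := hre a ha
      have h4 : Complex.sin a ≠ 0 := by rw [← norm_pos_iff, h3]; norm_num
      rw [div_mul_cancel_right₀ h4]
      rw [h2, Complex.norm_real, Real.norm_eq_abs, sq_abs]
      push_cast; simp
    rw [hT1] at f2
    have hT2 : T ≤ 1 + 8 / (Real.pi * N) := by
      have : deriv Complex.sin 0 = ((1 : ℝ) : ℂ) := by simp
      rw [this, ← Complex.ofReal_sub, Complex.norm_real, Real.norm_eq_abs, mul_one] at f2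
      have := neg_le_of_abs_le f2
      linarith
    have hsum : ‖∑ a ∈ S.erase 0, F a / (a ^ 2 * Complex.sin a)‖ ≤ M * T := by
      rw [hT, Finset.mul_sum]
      refine norm_sum_le_of_le _ (fun a ha => ?_)
      obtain ⟨h1, x, h2, h3⟩ := hre a ha
      rw [norm_div, norm_mul, h3, norm_pow, mul_one, mul_one_div]
      have := hM a
      rw [h2, Complex.ofReal_im, abs_zero, Real.exp_zero, mul_one, ← h2] at this
      gcongr
    have h5 := norm_sub_norm_le (deriv F 0) (∑ a ∈ S.erase 0, F a / (a ^ 2 * Complex.sin a))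
    have h6 : M * T ≤ M * (1 + 8 / (Real.pi * N)) := by gcongr
    have h7 : M + 16 * M / Real.pi / N = M * (1 + 8 / (Real.pi * N)) + 8 * M / (Real.pi * N) := by
      field_simp; ring
    rw [h7]; linarith
  have ht : Tendsto (fun N : ℕ => M + 16 * M / Real.pi / N) atTop (𝓝 (M + 0)) :=
    tendsto_const_nhds.add (tendsto_const_div_atTop_nhds_zero_nat _)
  rw [add_zero] at ht
  exact ge_of_tendsto ht (eventually_atTop.2 ⟨1, key⟩)

open Complex Metric Set Filter Topology in
theorem bern_PL (F : ℂ → ℂ) (hF : Differentiable ℂ F) (τ M C : ℝ)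
    (hC : ∀ z, ‖F z‖ ≤ C * Real.exp (τ * ‖z‖)) (hM : ∀ x : ℝ, ‖F x‖ ≤ M)
    (w : ℂ) (hw : 0 ≤ w.re) : ‖F (I * w)‖ ≤ M * Real.exp (τ * w.re) := by
  have hn : ∀ w : ℂ, ‖F (I * w) * Complex.exp (-(τ * w))‖ = ‖F (I * w)‖ * Real.exp (-(τ * w.re)) := by
    intro w; rw [norm_mul, Complex.norm_exp]; simp
  have := PhragmenLindelof.right_half_plane_of_bounded_on_real
    (f := fun w => F (I * w) * Complex.exp (-(τ * w))) (C := M) (z := w) ?_ ?_ ?_ ?_ hw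
  · rw [hn, Real.exp_neg, ← div_eq_mul_inv, div_le_iff₀ (Real.exp_pos _)] at this
    exact this
  · apply Differentiable.diffContOnCl
    fun_prop
  · refine ⟨1, by norm_num, τ + |τ|, ?_⟩
    apply Asymptotics.IsBigO.of_bound C
    refine Eventually.of_forall (fun z => ?_)
    rw [hn, Real.norm_eq_abs, Real.abs_exp, Real.rpow_one, add_mul, Real.exp_add, ← mul_assoc]
    have h1 := hC (I * z)
    rw [norm_mul, norm_I, one_mul] at h1
    have h2 : -(τ * z.re) ≤ |τ| * ‖z‖ := by
      refine (neg_le_abs _).trans ?_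
      rw [abs_mul]
      exact mul_le_mul_of_nonneg_left (Complex.abs_re_le_norm z) (abs_nonneg _)
    have h3 := Real.exp_le_exp.2 h2
    exact mul_le_mul h1 h3 (Real.exp_pos _).le ((norm_nonneg _).trans h1)
  · refine ⟨C, ?_⟩
    rw [eventually_map]
    filter_upwards [eventually_ge_atTop 0] with x hx
    rw [hn, Real.exp_neg, ← div_eq_mul_inv, div_le_iff₀ (Real.exp_pos _)]
    have h1 := hC (I * x)
    rw [norm_mul, norm_I, one_mul, Complex.norm_real, Real.norm_of_nonneg hx] at h1
    simpa using h1
  · intro x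
    rw [hn]
    have : I * (x * I) = ((-x : ℝ) : ℂ) := by
      push_cast; linear_combination (x : ℂ) * I_mul_I
    rw [this]
    simpa using hM (-x)

open Complex in
theorem bern_strip (F : ℂ → ℂ) (hF : Differentiable ℂ F) (τ M C : ℝ)
    (hC : ∀ z, ‖F z‖ ≤ C * Real.exp (τ * ‖z‖)) (hM : ∀ x : ℝ, ‖F x‖ ≤ M)
    (z : ℂ) : ‖F z‖ ≤ M * Real.exp (τ * |z.im|) := by
  rcases le_total 0 z.im with h | h
  · have := bern_PL F hF τ M C hC hM (-I * z) (by simpa using h)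
    have e : I * (-I * z) = z := by linear_combination (-z) * I_mul_I
    rw [e] at this
    rw [abs_of_nonneg h]
    simpa using this
  · have := bern_PL (fun z => F (-z)) (hF.comp differentiable_neg) τ M C
      (fun z => by simpa using hC (-z)) (fun x => by simpa using hM (-x)) (I * z) (by simpa using h)
    have e : -(I * (I * z)) = z := by linear_combination (-z) * I_mul_I
    simp only [e] at this
    rw [abs_of_nonpos h]
    simpa using this

theorem bern_scalar (F : ℂ → ℂ) (hF : Differentiable ℂ F) (τ M C : ℝ) (hτ : 0 < τ)
    (hC : ∀ z, ‖F z‖ ≤ C * Real.exp (τ * ‖z‖)) (hM : ∀ x : ℝ, ‖F x‖ ≤ M) :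
    ‖deriv F 0‖ ≤ τ * M := by
  have hs := bern_strip F hF τ M C hC hM
  have hτc : (τ : ℂ) ≠ 0 := by exact_mod_cast hτ.ne'
  have hd : HasDerivAt F (deriv F 0) 0 := (hF 0).hasDerivAt
  have hG : HasDerivAt (fun z : ℂ => (F (z / τ) - F (-(z / τ))) / 2) (deriv F 0 / τ) 0 := by
    have i1 : HasDerivAt (fun z : ℂ => z / τ) (1 / τ) 0 := (hasDerivAt_id 0).div_const _
    have h1 : HasDerivAt (fun z : ℂ => F (z / τ)) (deriv F 0 * (1 / τ)) 0 :=
      HasDerivAt.comp 0 (by simpa using hd) i1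
    have h2 : HasDerivAt (fun z : ℂ => F (-(z / τ))) (deriv F 0 * (-(1 / τ))) 0 :=
      HasDerivAt.comp 0 (h₂ := F) (by simpa using hd) i1.neg
    refine ((h1.sub h2).div_const 2).congr_deriv ?_
    ring
  have := bern_odd (fun z : ℂ => (F (z / τ) - F (-(z / τ))) / 2) (by
    have h1 : Differentiable ℂ (fun z : ℂ => F (z / τ)) := hF.comp (by fun_prop)
    have h2 : Differentiable ℂ (fun z : ℂ => F (-(z / τ))) := hF.comp (by fun_prop)
    exact (h1.sub h2).div_const 2) (by simp) M (by
    intro z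
    have him : τ * |(z / τ).im| = |z.im| := by
      rw [Complex.div_ofReal_im, abs_div, abs_of_pos hτ]; field_simp
    have h1 := hs (z / τ)
    have h2 := hs (-(z / τ))
    rw [Complex.neg_im, abs_neg, him] at h2
    rw [him] at h1
    have h3 := norm_sub_le (F (z / τ)) (F (-(z / τ)))
    rw [norm_div, Complex.norm_ofNat]
    linarith)
  rw [hG.deriv, norm_div, Complex.norm_real, Real.norm_of_nonneg hτ.le, div_le_iff₀ hτ] at this
  linarith

/-- (Bernstein inequality for Banach-space-valued entire functions.)
Let `E` be a complex Banach space and `F : ℂ → E` an entire function of exponential type `σ`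
with `sup_{x∈ℝ} ‖F(x)‖ ≤ M < ∞`. Then `sup_{x∈ℝ} ‖F'(x)‖ ≤ σ·M`. -/
theorem stmt2 {E : Type*} [NormedAddCommGroup E] [NormedSpace ℂ E]
    (F : ℂ → E) (σ M : ℝ) (hσ : 0 < σ)
    (hF : Differentiable ℂ F)
    (htype : ∀ ε > (0 : ℝ), ∃ C > (0 : ℝ), ∀ z : ℂ, ‖F z‖ ≤ C * Real.exp ((σ + ε) * ‖z‖))
    (hM : ∀ x : ℝ, ‖F x‖ ≤ M) :
    ∀ x : ℝ, ‖deriv F x‖ ≤ σ * M := by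
  intro x
  have hM0 : 0 ≤ M := (norm_nonneg _).trans (hM 0)
  obtain ⟨l, hl1, hl2⟩ := exists_dual_vector'' ℂ (deriv F x)
  have hle : ∀ v, ‖l v‖ ≤ ‖v‖ := fun v => by
    have := l.le_of_opNorm_le hl1 v
    simpa using this
  have key : ∀ ε > (0 : ℝ), ‖deriv F x‖ ≤ (σ + ε) * M := by
    intro ε hε
    obtain ⟨C, hC, hCb⟩ := htype ε hε
    have hd : HasDerivAt (fun z : ℂ => l (F (x + z))) (l (deriv F x)) 0 := by
      have h1 : HasDerivAt F (deriv F x) (x + 0 : ℂ) := by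
        rw [add_zero]; exact (hF x).hasDerivAt
      exact l.hasFDerivAt.comp_hasDerivAt (0 : ℂ) (h1.comp_const_add (x : ℂ) 0)
    have := bern_scalar (fun z : ℂ => l (F (x + z)))
      (l.differentiable.comp (hF.comp (by fun_prop))) (σ + ε) M
      (C * Real.exp ((σ + ε) * |x|)) (by linarith) (by
        intro z
        refine (hle _).trans ((hCb _).trans ?_)
        rw [mul_assoc, ← Real.exp_add, ← mul_add]
        have h2 := norm_add_le (x : ℂ) z
        rw [Complex.norm_real, Real.norm_eq_abs] at h2
        gcongr)
      (by
        intro y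
        refine (hle _).trans ?_
        have := hM (x + y)
        simpa using this)
    rw [hd.deriv, hl2] at this
    simpa using this
  refine le_of_forall_pos_le_add (fun δ hδ => ?_)
  have := key (δ / (M + 1)) (by positivity)
  have h3 : δ / (M + 1) * M ≤ δ := by
    rw [div_mul_eq_mul_div, div_le_iff₀ (by positivity)]
    nlinarith
  nlinarith
end

section
/- Let f ∈ B^1_{∞,1}(ℝ) with Littlewood–Paley decomposition f = Σ_{n≥0} f_n, where each f_n is a bounded entire function of exponential type 2^{n+1}. Then for all bounded self-adjoint operators A, H on a separable Hilbert space: ‖f(A+H) − f(A)‖ ≤ 2‖f‖_{B^1_{∞,1}}‖H‖ (operator Lipschitz property). -/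
theorem pl_upper (G : ℂ → ℂ) (C K b M : ℝ)
    (hd : ∀ z : ℂ, 0 ≤ z.im → DifferentiableAt ℂ G z)
    (hg : ∀ z : ℂ, 0 ≤ z.im → ‖G z‖ ≤ C * Real.exp (b * ‖z‖))
    (hi : ∀ y : ℝ, 0 ≤ y → ‖G (y * Complex.I)‖ ≤ K)
    (hr : ∀ x : ℝ, ‖G x‖ ≤ M) (z : ℂ) (hz : 0 ≤ z.im) : ‖G z‖ ≤ M := by
  have key := PhragmenLindelof.right_half_plane_of_bounded_on_real
    (f := fun w => G (w * Complex.I)) (C := M) (z := -Complex.I * z) ?_ ?_ ?_ ?_ ?_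
  · have e : -Complex.I * z * Complex.I = z := by
      linear_combination (-z) * Complex.I_sq
    simpa only [e] using key
  · have : ∀ w : ℂ, 0 ≤ w.re → DifferentiableAt ℂ (fun w => G (w * Complex.I)) w := by
      intro w hw
      have h1 : DifferentiableAt ℂ G (w * Complex.I) := hd _ (by simpa using hw)
      exact h1.comp w (f := fun w => w * Complex.I) (by fun_prop)
    refine ⟨fun w hw => (this w (le_of_lt hw)).differentiableWithinAt, ?_⟩
    intro w hw
    rw [Complex.closure_setOfPred_lt_re] at hw
    exact (this w hw).continuousAt.continuousWithinAt
  · refine ⟨1, by norm_num, b, ?_⟩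
    apply Asymptotics.IsBigO.of_bound C
    filter_upwards [Filter.mem_inf_of_right (Filter.mem_principal_self _)] with w hw
    have := hg (w * Complex.I) (by simpa using le_of_lt hw)
    simpa using this
  · refine ⟨K, ?_⟩
    simp only [Filter.eventually_map]
    filter_upwards [Filter.eventually_ge_atTop 0] with y hy using hi y hy
  · intro x
    have := hr (-x)
    have e : (x : ℂ) * Complex.I * Complex.I = ((-x : ℝ) : ℂ) := by
      push_cast
      linear_combination (x : ℂ) * Complex.I_sq
    simpa only [e] using this
  · simpa using hz

theorem upper_growth (g : ℂ → ℂ) (hg : Differentiable ℂ g) (C τ M : ℝ)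
    (hgr : ∀ z, ‖g z‖ ≤ C * Real.exp (τ * ‖z‖)) (hr : ∀ x : ℝ, ‖g x‖ ≤ M) (hτ : 0 ≤ τ)
    (z : ℂ) (hz : 0 ≤ z.im) : ‖g z‖ ≤ M * Real.exp (τ * z.im) := by
  have nexp : ∀ z : ℂ, ‖Complex.exp (Complex.I * τ * z)‖ = Real.exp (-(τ * z.im)) := by
    intro z
    rw [Complex.norm_exp]; congr 1; simp
  have hC : 0 ≤ C := by
    have := (norm_nonneg _).trans (hgr 0)
    simpa using this
  have := pl_upper (fun z => g z * Complex.exp (Complex.I * τ * z)) C C τ M ?_ ?_ ?_ ?_ z hz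
  · simp only [norm_mul, nexp, Real.exp_neg] at this
    rwa [← div_eq_mul_inv, div_le_iff₀ (Real.exp_pos _)] at this
  · intro z _
    have := hg z
    fun_prop
  · intro z hz
    rw [norm_mul, nexp]
    calc _ ≤ ‖g z‖ * 1 := by
          gcongr
          rw [Real.exp_le_one_iff]
          have := mul_nonneg hτ hz
          linarith
      _ ≤ _ := by simpa using hgr z
  · intro y hy
    have h1 := hgr (y * Complex.I)
    rw [norm_mul, nexp]
    simp only [norm_mul, Complex.norm_real, Complex.norm_I, mul_one, Real.norm_eq_abs, abs_of_nonneg hy] at h1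
    simp only [Complex.mul_im, Complex.ofReal_re, Complex.I_im, Complex.I_re, mul_one, mul_zero, add_zero]
    calc _ ≤ C * Real.exp (τ * y) * Real.exp (-(τ * y)) := by gcongr
      _ = C := by rw [mul_assoc, ← Real.exp_add]; simp
  · intro x
    rw [norm_mul, nexp]; simpa using hr x

theorem refl_le (g : ℂ → ℂ) (hg : Differentiable ℂ g) (C τ M : ℝ)
    (hgr : ∀ z, ‖g z‖ ≤ C * Real.exp (τ * ‖z‖)) (hr : ∀ x : ℝ, ‖g x‖ ≤ M) (hτ : 0 ≤ τ)
    (l : ℂ) (hl : M < ‖l‖) (z : ℂ) (hz : 0 ≤ z.im) :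
    ‖g (starRingEnd ℂ z) - l * Complex.exp (-Complex.I * τ * starRingEnd ℂ z)‖
      ≤ ‖g z - l * Complex.exp (-Complex.I * τ * z)‖ := by
  have nexp : ∀ z : ℂ, ‖Complex.exp (-Complex.I * τ * z)‖ = Real.exp (τ * z.im) := by
    intro z
    rw [Complex.norm_exp]; congr 1; simp
  have hM : 0 ≤ M := (norm_nonneg _).trans (hr 0)
  set h : ℂ → ℂ := fun z => g z - l * Complex.exp (-Complex.I * τ * z) with hh
  have hhd : Differentiable ℂ h := by fun_prop
  have hcd : Differentiable ℂ (starRingEnd ℂ ∘ h ∘ starRingEnd ℂ) := fun z =>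
    differentiableAt_conj_conj_iff.2 (hhd _)
  have hgcd : Differentiable ℂ (starRingEnd ℂ ∘ g ∘ starRingEnd ℂ) := fun z =>
    differentiableAt_conj_conj_iff.2 (hg _)
  have low : ∀ z : ℂ, 0 ≤ z.im → (‖l‖ - M) * Real.exp (τ * z.im) ≤ ‖h z‖ := by
    intro z hz
    have h1 := upper_growth g hg C τ M hgr hr hτ z hz
    have h2 := norm_sub_norm_le (l * Complex.exp (-Complex.I * τ * z)) (g z)
    rw [norm_sub_rev, norm_mul, nexp] at h2
    simp only [hh]
    linarith
  have hne : ∀ z : ℂ, 0 ≤ z.im → h z ≠ 0 := by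
    intro z hz h0
    have := low z hz
    rw [h0, norm_zero] at this
    have h3 := mul_pos (sub_pos.2 hl) (Real.exp_pos (τ * z.im))
    linarith
  have up : ∀ z : ℂ, 0 ≤ z.im → ‖h (starRingEnd ℂ z)‖ ≤ (M + ‖l‖) * Real.exp (τ * z.im) := by
    intro z hz
    have h1 := upper_growth _ hgcd C τ M (by intro z; simpa using hgr (starRingEnd ℂ z))
      (by intro x; simpa using hr x) hτ z hz
    simp only [Function.comp, RCLike.norm_conj] at h1
    have h2 := norm_sub_le (g (starRingEnd ℂ z)) (l * Complex.exp (-Complex.I * τ * starRingEnd ℂ z))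
    rw [norm_mul, nexp, Complex.conj_im] at h2
    have h3 : Real.exp (τ * -z.im) ≤ Real.exp (τ * z.im) := by
      gcongr; linarith
    have h4 := mul_le_mul_of_nonneg_left h3 (norm_nonneg l)
    simp only [hh]
    linarith
  have hb : ∀ z : ℂ, 0 ≤ z.im →
      ‖(starRingEnd ℂ ∘ h ∘ starRingEnd ℂ) z / h z‖ ≤ (M + ‖l‖) / (‖l‖ - M) := by
    intro z hz
    simp only [Function.comp, norm_div, RCLike.norm_conj]
    rw [div_le_div_iff₀ (norm_pos_iff.2 (hne z hz)) (sub_pos.2 hl)]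
    calc _ ≤ (M + ‖l‖) * Real.exp (τ * z.im) * (‖l‖ - M) :=
          mul_le_mul_of_nonneg_right (up z hz) (sub_pos.2 hl).le
      _ = (M + ‖l‖) * ((‖l‖ - M) * Real.exp (τ * z.im)) := by ring
      _ ≤ _ := by gcongr; exact low z hz
  have := pl_upper (fun z => (starRingEnd ℂ ∘ h ∘ starRingEnd ℂ) z / h z)
    ((M + ‖l‖) / (‖l‖ - M)) ((M + ‖l‖) / (‖l‖ - M)) 0 1
    (fun z hz => (hcd z).div (hhd z) (hne z hz)) (by intro z hz; simpa using hb z hz)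
    (fun y hy => hb _ (by simpa using hy)) ?_ z hz
  · simp only [Function.comp, norm_div, RCLike.norm_conj] at this
    rwa [div_le_one (norm_pos_iff.2 (hne z hz))] at this
  · intro x
    simp only [Function.comp, norm_div, RCLike.norm_conj, Complex.conj_ofReal]
    exact div_self_le_one _

theorem bernstein_zero (g : ℂ → ℂ) (hg : Differentiable ℂ g) (C τ M : ℝ)
    (hgr : ∀ z, ‖g z‖ ≤ C * Real.exp (τ * ‖z‖)) (hr : ∀ x : ℝ, ‖g x‖ ≤ M) (hτ : 0 ≤ τ) :
    ‖deriv g 0‖ ≤ τ * M := by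
  have hM : 0 ≤ M := (norm_nonneg _).trans (hr 0)
  suffices H : ∀ N, M < N → ‖deriv g 0‖ ≤ τ * N by
    have ht : Filter.Tendsto (fun N => τ * N) (nhdsWithin M (Set.Ioi M)) (nhds (τ * M)) := by
      apply Filter.Tendsto.mono_left _ nhdsWithin_le_nhds
      exact (continuous_const.mul continuous_id).tendsto M
    exact ge_of_tendsto ht (by filter_upwards [self_mem_nhdsWithin] with N hN using H N hN)
  intro N hN
  have hN0 : 0 < N := hM.trans_lt hN
  by_cases hu : deriv g 0 = 0
  · rw [hu, norm_zero]; positivity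
  set u := ‖deriv g 0‖ with hud
  have hu0 : 0 < u := norm_pos_iff.2 hu
  set ω : ℂ := deriv g 0 / u with hω
  have hωn : ‖ω‖ = 1 := by
    rw [hω, norm_div, Complex.norm_real, ← hud, Real.norm_of_nonneg hu0.le, div_self hu0.ne']
  have hg1 : deriv g 0 = u * ω := by
    have : (u : ℂ) ≠ 0 := by exact_mod_cast hu0.ne'
    rw [hω]; field_simp
  set l : ℂ := N * (Complex.I * ω) with hl
  have hln : ‖l‖ = N := by
    rw [hl, norm_mul, norm_mul, hωn, Complex.norm_real]; simp [abs_of_pos hN0]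
  set h : ℂ → ℂ := fun z => g z - l * Complex.exp (-Complex.I * τ * z) with hh
  have hle : ∀ z : ℂ, 0 ≤ z.im → ‖h (starRingEnd ℂ z)‖ ≤ ‖h z‖ :=
    refl_le g hg C τ M hgr hr hτ l (by rw [hln]; exact hN)
  have hhd : HasDerivAt h (u * ω + Complex.I * τ * l) 0 := by
    have h1 : HasDerivAt g (u * ω) 0 := hg1 ▸ (hg 0).hasDerivAt
    have h2 : HasDerivAt (fun z : ℂ => -Complex.I * τ * z) (-Complex.I * τ) 0 := by
      simpa using (hasDerivAt_id (0 : ℂ)).const_mul (-Complex.I * τ)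
    have h3 := h1.sub ((h2.cexp).const_mul l)
    convert! h3 using 1
    simp; ring
  set h1 : ℂ := u * ω + Complex.I * τ * l with hh1
  have hline : ∀ c : ℂ, HasDerivAt (fun y : ℝ => h (y * c)) (h1 * c) 0 := by
    intro c
    have e1 : HasDerivAt (fun y : ℂ => y * c) c ((0 : ℝ) : ℂ) := by
      simpa using (hasDerivAt_id ((0 : ℝ) : ℂ)).mul_const c
    have e2 : HasDerivAt h h1 ((fun y : ℂ => y * c) ((0 : ℝ) : ℂ)) := by simpa using hhd
    exact (HasDerivAt.comp ((0 : ℝ) : ℂ) (h := fun y : ℂ => y * c) e2 e1).comp_ofReal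
  have d := ((hline Complex.I).norm_sq).sub ((hline (-Complex.I)).norm_sq)
  have dn := d.tendsto_slope_zero_right
  have pos : 0 ≤ 2 * inner ℝ (h ((0 : ℝ) * Complex.I)) (h1 * Complex.I) -
      2 * inner ℝ (h ((0 : ℝ) * -Complex.I)) (h1 * -Complex.I) := by
    refine ge_of_tendsto dn ?_
    filter_upwards [self_mem_nhdsWithin] with t ht
    have ht : 0 < t := ht
    have := hle (t * Complex.I) (by simpa using ht.le)
    have e : starRingEnd ℂ (t * Complex.I) = t * -Complex.I := by simp
    rw [e] at this
    have h5 := pow_le_pow_left₀ (norm_nonneg _) this 2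
    simp only [smul_eq_mul, zero_add, Pi.sub_apply]
    simp only [Complex.ofReal_zero, zero_mul, sub_self, sub_zero]
    apply mul_nonneg (inv_nonneg.2 ht.le)
    linarith
  have h00 : h 0 = g 0 - l := by simp [hh]
  simp only [Complex.ofReal_zero, zero_mul, h00, mul_neg, neg_zero, inner_neg_right] at pos
  have hg0 : ‖g 0‖ ≤ M := by simpa using hr 0
  have hw : |(ω * starRingEnd ℂ (g 0)).im| ≤ M := by
    refine (Complex.abs_im_le_norm _).trans ?_
    rw [norm_mul, hωn, RCLike.norm_conj, one_mul]; exact hg0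
  have hpq : ω.re ^ 2 + ω.im ^ 2 = 1 := by
    have := Complex.sq_norm ω
    rw [hωn, Complex.normSq_apply] at this
    linarith
  simp only [hh1, hl, Complex.inner] at pos
  simp at pos hw
  have hw2 := neg_le_of_abs_le hw
  have fin : (u - τ * N) * (N + (ω.im * (g 0).re - ω.re * (g 0).im)) ≤ 0 := by
    have k := congrArg (fun t => (u - τ * N) * N * t) hpq
    linarith
  by_contra hc
  push Not at hc
  have : 0 < (u - τ * N) * (N + (ω.im * (g 0).re - ω.re * (g 0).im)) := by
    apply mul_pos <;> linarith
  linarith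

theorem bernstein_lip (g : ℂ → ℂ) (hg : Differentiable ℂ g) (C τ M : ℝ)
    (hgr : ∀ z, ‖g z‖ ≤ C * Real.exp (τ * ‖z‖)) (hr : ∀ x : ℝ, ‖g x‖ ≤ M) (hτ : 0 ≤ τ) :
    ‖g 1 - g 0‖ ≤ τ * M := by
  have hC : 0 ≤ C := by
    have := (norm_nonneg _).trans (hgr 0)
    simpa using this
  have hb : ∀ x : ℝ, ‖deriv g x‖ ≤ τ * M := by
    intro x
    have := bernstein_zero (fun z => g (z + x)) (by fun_prop) (C * Real.exp (τ * ‖(x : ℂ)‖)) τ M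
      ?_ ?_ hτ
    · rw [deriv_comp_add_const] at this
      simpa using this
    · intro z
      refine (hgr _).trans ?_
      rw [mul_assoc, ← Real.exp_add]
      gcongr
      have := norm_add_le z (x : ℂ)
      nlinarith
    · intro y
      simpa using hr (y + x)
  have := norm_image_sub_le_of_norm_deriv_le_segment_01' (f := fun t : ℝ => g t)
    (f' := fun t : ℝ => deriv g t) (C := τ * M)
    (fun x _ => ((hg x).hasDerivAt.comp_ofReal).hasDerivWithinAt) (fun x _ => hb x)
  simpa using this

noncomputable def tcoef (f : ℂ → ℂ) (k : ℕ) : ℂ := (k.factorial : ℂ)⁻¹ * iteratedDeriv k f 0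

theorem tcoef_bound (f : ℂ → ℂ) (hf : Differentiable ℂ f) (C s : ℝ)
    (hgr : ∀ z, ‖f z‖ ≤ C * Real.exp (s * ‖z‖)) (R : ℝ) (hR : 0 < R) (k : ℕ) :
    ‖tcoef f k‖ ≤ C * Real.exp (s * R) / R ^ k := by
  have h := Complex.norm_iteratedDeriv_le_of_forall_mem_sphere_norm_le (f := f) (c := 0) k hR
    hf.diffContOnCl (C := C * Real.exp (s * R)) (by
      intro z hz
      have : ‖z‖ = R := by simpa using hz
      simpa [this] using hgr z)
  have hk : (0 : ℝ) < k.factorial := by exact_mod_cast k.factorial_pos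
  rw [tcoef, norm_mul, norm_inv, Complex.norm_natCast, inv_mul_le_iff₀ hk]
  rwa [mul_div_assoc] at h

theorem hasSum_tcoef (f : ℂ → ℂ) (hf : Differentiable ℂ f) (z : ℂ) :
    HasSum (fun k => tcoef f k * z ^ k) (f z) := by
  have := Complex.hasSum_taylorSeries_of_entire hf 0 z
  convert! this using 2 with k
  simp [tcoef]; ring

section ops
variable {H : Type*} [NormedAddCommGroup H] [InnerProductSpace ℂ H] [CompleteSpace H]

theorem term_bound (f : ℂ → ℂ) (hf : Differentiable ℂ f) (C s : ℝ)
    (hgr : ∀ z, ‖f z‖ ≤ C * Real.exp (s * ‖z‖)) {E : Type*} [NormedRing E] [NormedAlgebra ℂ E]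
    [NormOneClass E] (r : ℝ)
    (hr : 0 ≤ r) (T : E) (hT : ‖T‖ ≤ r) (k : ℕ) :
    ‖tcoef f k • T ^ k‖ ≤ C * Real.exp (s * (r + 1)) * (r / (r + 1)) ^ k := by
  rw [norm_smul]
  have h1 := tcoef_bound f hf C s hgr (r + 1) (by linarith) k
  have h2 : ‖T ^ k‖ ≤ r ^ k := (norm_pow_le T k).trans (pow_le_pow_left₀ (norm_nonneg _) hT k)
  calc _ ≤ C * Real.exp (s * (r + 1)) / (r + 1) ^ k * r ^ k :=
        mul_le_mul h1 h2 (norm_nonneg _) ((norm_nonneg _).trans h1)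
    _ = _ := by rw [div_pow]; ring

theorem geo_hasSum (r K : ℝ) (hr : 0 ≤ r) :
    HasSum (fun k : ℕ => K * (r / (r + 1)) ^ k) (K * (r + 1)) := by
  have h := (hasSum_geometric_of_lt_one (r := r / (r + 1)) (by positivity)
    (by rw [div_lt_one (by linarith)]; linarith)).mul_left K
  convert! h using 2
  field_simp
  ring

theorem cfc_eq_tsum [Nontrivial H] (f : ℂ → ℂ) (hf : Differentiable ℂ f) (C s : ℝ)
    (hgr : ∀ z, ‖f z‖ ≤ C * Real.exp (s * ‖z‖)) (T : H →L[ℂ] H) (hT : IsSelfAdjoint T) :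
    cfc f T = ∑' k, tcoef f k • T ^ k := by
  have hn : IsStarNormal T := hT.isStarNormal
  have hu := (geo_hasSum ‖T‖ (C * Real.exp (s * (‖T‖ + 1))) (norm_nonneg T)).summable
  have hS : Summable (fun k => tcoef f k • T ^ k) :=
    Summable.of_norm_bounded hu (fun k => term_bound f hf C s hgr ‖T‖ (norm_nonneg _) T le_rfl k)
  have hunif := tendstoUniformlyOn_tsum_nat (f := fun k (z : ℂ) => tcoef f k * z ^ k) hu
    (s := spectrum ℂ T) (fun k z hz => by
      simpa using term_bound f hf C s hgr ‖T‖ (norm_nonneg _) z (spectrum.norm_le_norm_of_mem hz) k)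
  have e : (fun z => ∑' k, tcoef f k * z ^ k) = f := by
    funext z; exact (hasSum_tcoef f hf z).tsum_eq
  rw [e] at hunif
  have ht := tendsto_cfc_fun hunif (.of_forall fun N => by fun_prop)
  refine tendsto_nhds_unique ht ?_
  convert! hS.hasSum.tendsto_sum_nat using 2 with N
  have := cfc_sum (fun k (z : ℂ) => tcoef f k * z ^ k) T (Finset.range N)
    (fun k _ => by fun_prop)
  rw [Finset.sum_fn] at this
  rw [this]
  refine Finset.sum_congr rfl fun k _ => ?_
  rw [cfc_const_mul _ _ _ (by fun_prop), cfc_pow_id T k hn]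

theorem cfc_norm_le_real (f : ℂ → ℂ) (M : ℝ) (hM : ∀ x : ℝ, ‖f x‖ ≤ M)
    (T : H →L[ℂ] H) (hT : IsSelfAdjoint T) : ‖cfc f T‖ ≤ M := by
  refine norm_cfc_le ((norm_nonneg _).trans (hM 0)) fun z hz => ?_
  rw [hT.mem_spectrum_eq_re hz]
  exact hM _

theorem op_lip_aux [Nontrivial H] (f : ℂ → ℂ) (hf : Differentiable ℂ f) (C s ε M : ℝ) (hs : 0 ≤ s)
    (hε : 0 < ε)
    (hgr : ∀ z, ‖f z‖ ≤ C * Real.exp (s * ‖z‖)) (hM : ∀ x : ℝ, ‖f x‖ ≤ M)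
    (A B : H →L[ℂ] H) (hA : IsSelfAdjoint A) (hB : IsSelfAdjoint B) :
    ‖cfc f (A + B) - cfc f A‖ ≤ (s + ε) * ‖B‖ * M := by
  have hC : 0 ≤ C := by
    have := (norm_nonneg _).trans (hgr 0)
    simpa using this
  have hM0 : 0 ≤ M := (norm_nonneg _).trans (hM 0)
  set F : ℂ → (H →L[ℂ] H) := fun z => ∑' k, tcoef f k • (A + z • B) ^ k with hF
  have hnorm : ∀ z : ℂ, ‖A + z • B‖ ≤ ‖A‖ + ‖z‖ * ‖B‖ := fun z =>
    (norm_add_le _ _).trans (by rw [norm_smul])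
  have hFd : Differentiable ℂ F := by
    intro z
    have hr : (0 : ℝ) ≤ ‖A‖ + (‖z‖ + 1) * ‖B‖ := by positivity
    have := Complex.differentiableOn_tsum_of_summable_norm (U := Metric.ball (0 : ℂ) (‖z‖ + 1))
      (F := fun k z => tcoef f k • (A + z • B) ^ k)
      (geo_hasSum (‖A‖ + (‖z‖ + 1) * ‖B‖)
        (C * Real.exp (s * (‖A‖ + (‖z‖ + 1) * ‖B‖ + 1))) hr).summable
      (fun k => by fun_prop) Metric.isOpen_ball
      (fun k w hw => term_bound f hf C s hgr _ hr _ ((hnorm w).trans (by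
        have : ‖w‖ < ‖z‖ + 1 := by simpa using hw
        gcongr)) k)
    exact this.differentiableAt (Metric.isOpen_ball.mem_nhds (by simp))
  have hFg : ∀ z, ‖F z‖ ≤ (C * Real.exp ((s + ε) * (‖A‖ + 1)) / ε) *
      Real.exp (((s + ε) * ‖B‖) * ‖z‖) := by
    intro z
    set r := ‖A‖ + ‖z‖ * ‖B‖ with hr
    have hr0 : 0 ≤ r := by positivity
    have h1 : ‖F z‖ ≤ C * Real.exp (s * (r + 1)) * (r + 1) :=
      tsum_of_norm_bounded (geo_hasSum r _ hr0)
        (fun k => term_bound f hf C s hgr r hr0 _ (hnorm z) k)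
    have h2 : r + 1 ≤ Real.exp (ε * (r + 1)) / ε := by
      rw [le_div_iff₀ hε]
      have := Real.add_one_le_exp (ε * (r + 1))
      linarith
    calc _ ≤ C * Real.exp (s * (r + 1)) * (Real.exp (ε * (r + 1)) / ε) := by
          refine h1.trans ?_
          gcongr
      _ = C * (Real.exp (s * (r + 1)) * Real.exp (ε * (r + 1))) / ε := by ring
      _ = C * (Real.exp ((s + ε) * (‖A‖ + 1)) * Real.exp (((s + ε) * ‖B‖) * ‖z‖)) / ε := by
          rw [← Real.exp_add, ← Real.exp_add]
          congr 3
          rw [hr]; ring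
      _ = _ := by ring
  have hsa : ∀ x : ℝ, IsSelfAdjoint (A + (x : ℂ) • B) := fun x =>
    hA.add (IsSelfAdjoint.smul (by simp [IsSelfAdjoint]) hB)
  have hFc : ∀ x : ℝ, F x = cfc f (A + (x : ℂ) • B) := fun x =>
    (cfc_eq_tsum f hf C s hgr _ (hsa x)).symm
  have hFr : ∀ x : ℝ, ‖F x‖ ≤ M := fun x => by
    rw [hFc]; exact cfc_norm_le_real f M hM _ (hsa x)
  have e1 : cfc f (A + B) = F 1 := by simpa using (hFc 1).symm
  have e0 : cfc f A = F 0 := by simpa using (hFc 0).symm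
  rw [e1, e0]
  obtain ⟨φ, hφ, hφ2⟩ := exists_dual_vector'' ℂ (F 1 - F 0)
  have hφle : ∀ T, ‖φ T‖ ≤ ‖T‖ := fun T =>
    (φ.le_opNorm T).trans (by nlinarith [norm_nonneg T])
  have := bernstein_lip (fun z => φ (F z)) (by fun_prop) _ ((s + ε) * ‖B‖) M
    (fun z => (hφle _).trans (hFg z)) (fun x => (hφle _).trans (hFr x)) (by positivity)
  rw [← map_sub, hφ2] at this
  simpa using this

theorem op_lip (f : ℂ → ℂ) (hf : Differentiable ℂ f) (σ M : ℝ) (hσ : 0 ≤ σ)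
    (hgr : ∀ ε > (0 : ℝ), ∃ C > (0 : ℝ), ∀ z : ℂ, ‖f z‖ ≤ C * Real.exp ((σ + ε) * ‖z‖))
    (hM : ∀ x : ℝ, ‖f x‖ ≤ M)
    (A B : H →L[ℂ] H) (hA : IsSelfAdjoint A) (hB : IsSelfAdjoint B) :
    ‖cfc f (A + B) - cfc f A‖ ≤ σ * ‖B‖ * M := by
  have hM0 : 0 ≤ M := (norm_nonneg _).trans (hM 0)
  rcases subsingleton_or_nontrivial H with hH | hH
  · rw [Subsingleton.elim (cfc f (A + B) - cfc f A) 0, norm_zero]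
    positivity
  have ht : Filter.Tendsto (fun ε : ℝ => (σ + ε + ε) * ‖B‖ * M) (nhdsWithin 0 (Set.Ioi 0))
      (nhds (σ * ‖B‖ * M)) := by
    apply Filter.Tendsto.mono_left _ nhdsWithin_le_nhds
    exact Continuous.tendsto' (by fun_prop) _ _ (by simp)
  refine ge_of_tendsto ht ?_
  filter_upwards [self_mem_nhdsWithin] with ε hε
  have hε : 0 < ε := hε
  obtain ⟨C, _, hC⟩ := hgr ε hε
  exact op_lip_aux f hf C (σ + ε) ε M (by positivity) hε hC hM A B hA hB

theorem cfc_tendsto (f : ℝ → ℝ) (fn : ℕ → ℂ → ℂ) (a : ℕ → ℝ)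
    (hentire : ∀ n, Differentiable ℂ (fn n))
    (hbound : ∀ n, ∀ x : ℝ, ‖fn n x‖ ≤ a n)
    (hdecomp : ∀ x : ℝ, (f x : ℂ) = ∑' n, fn n x)
    (ha : Summable a) (T : H →L[ℂ] H) (hT : IsSelfAdjoint T) :
    Filter.Tendsto (fun N => ∑ n ∈ Finset.range N, cfc (fn n) T) Filter.atTop (nhds (cfc f T)) := by
  rw [cfc_real_eq_complex f hT]
  have hc : ∀ n, Continuous (fn n) := fun n => (hentire n).continuous
  have hunif := tendstoUniformlyOn_tsum_nat (f := fn) ha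
    (s := spectrum ℂ T) (fun n z hz => by
      rw [hT.mem_spectrum_eq_re hz]; exact hbound n _)
  have h2 := hunif.congr_right (g := fun z : ℂ => (f z.re : ℂ)) (fun z hz => by
    have : z = (z.re : ℂ) := hT.mem_spectrum_eq_re hz
    simp only
    rw [hdecomp, ← this])
  have ht := tendsto_cfc_fun h2 (.of_forall fun N => by fun_prop)
  convert! ht using 2 with N
  have := cfc_sum fn T (Finset.range N) (fun k _ => by fun_prop)
  rw [Finset.sum_fn] at this
  exact this.symm

end ops


/-- Let `f ∈ B¹_{∞,1}(ℝ)`, given through its Littlewood–Paley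
decomposition `f = ∑_{n≥0} f_n` where each `f_n` is a bounded entire function of
exponential type `2^{n+1}` with `‖f_n‖_{L∞(ℝ)} ≤ a n` and `∑ 2^n a n < ∞` (the Besov
norm).  Then for all bounded self-adjoint operators `A, B` on a Hilbert space:
`‖f(A+B) − f(A)‖ ≤ 2·(∑_n 2^n a n)·‖B‖` (operator Lipschitz property). -/
theorem stmt17 {H : Type*} [NormedAddCommGroup H] [InnerProductSpace ℂ H] [CompleteSpace H]
    (f : ℝ → ℝ) (hf : Continuous f)
    (fn : ℕ → ℂ → ℂ) (a : ℕ → ℝ)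
    (hentire : ∀ n, Differentiable ℂ (fn n))
    (htype : ∀ n, ∀ ε > (0 : ℝ), ∃ C > (0 : ℝ), ∀ z : ℂ,
      ‖fn n z‖ ≤ C * Real.exp (((2 : ℝ) ^ (n + 1) + ε) * ‖z‖))
    (hbound : ∀ n, ∀ x : ℝ, ‖fn n x‖ ≤ a n)
    (hdecomp : ∀ x : ℝ, (f x : ℂ) = ∑' n, fn n x)
    (hbesov : Summable fun n => (2 : ℝ) ^ n * a n)
    (A B : H →L[ℂ] H) (hA : IsSelfAdjoint A) (hB : IsSelfAdjoint B) :
    ‖cfc f (A + B) - cfc f A‖ ≤ 2 * (∑' n, (2 : ℝ) ^ n * a n) * ‖B‖ := by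
  have ha0 : ∀ n, 0 ≤ a n := fun n => (norm_nonneg _).trans (hbound n 0)
  have ha : Summable a := by
    refine Summable.of_nonneg_of_le ha0 (fun n => ?_) hbesov
    have : (1 : ℝ) ≤ 2 ^ n := one_le_pow₀ (by norm_num)
    nlinarith [ha0 n]
  have t1 := cfc_tendsto f fn a hentire hbound hdecomp ha (A + B) (hA.add hB)
  have t0 := cfc_tendsto f fn a hentire hbound hdecomp ha A hA
  refine le_of_tendsto (t1.sub t0).norm (Filter.Eventually.of_forall fun N => ?_)
  rw [← Finset.sum_sub_distrib]
  calc _ ≤ ∑ n ∈ Finset.range N, (2 * ‖B‖) * ((2 : ℝ) ^ n * a n) := by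
        refine norm_sum_le_of_le _ fun n _ => ?_
        refine (op_lip (fn n) (hentire n) (2 ^ (n + 1)) (a n) (by positivity) (htype n)
          (hbound n) A B hA hB).trans (le_of_eq ?_)
        rw [pow_succ]; ring
    _ = (2 * ‖B‖) * ∑ n ∈ Finset.range N, ((2 : ℝ) ^ n * a n) := by rw [Finset.mul_sum]
    _ ≤ (2 * ‖B‖) * ∑' n, ((2 : ℝ) ^ n * a n) := by
        gcongr
        exact hbesov.sum_le_tsum _ (fun n _ => mul_nonneg (by positivity) (ha0 n))
    _ = _ := by ring
end

section
/- Suppose f ∈ B^s_{∞,1}(ℝ) for some s ∈ (1,2]. Let S_f(A;H) := f(A+H) − f(A) − Df(A;H) be the first-order Taylor remainder of the operator function. Then for all bounded self-adjoint A, H, H': ‖S_f(A;H') − S_f(A;H)‖ ≤ 4‖f‖_{B^s_{∞,1}} (δ(H,H'))^{s−1} ‖H'−H‖, where δ(H,H') := min(‖H‖,‖H'‖) + ‖H'−H‖/2. In particular (H'=0), ‖S_f(A;H)‖ ≤ 2^{3−s}‖f‖_{B^s_{∞,1}}‖H‖^s. -/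
open Complex in
theorem bern_PL_s18 (g : ℂ → ℂ) (hg : Differentiable ℂ g) (C B : ℝ)
    (hgr : ∀ z, ‖g z‖ ≤ C * Real.exp (B * ‖z‖)) (hb : ∀ x : ℝ, ‖g x‖ ≤ 1) (hB : 0 ≤ B)
    (y : ℝ) (hy : 0 ≤ y) : ‖g (I * y)‖ ≤ Real.exp (B * y) := by
  have hC : 0 ≤ C := by
    have := (norm_nonneg _).trans (hgr 0)
    simpa using this
  have key : ‖g (I * (y : ℂ)) * cexp (-B * (y : ℂ))‖ ≤ 1 := by
    refine PhragmenLindelof.right_half_plane_of_bounded_on_real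
      (f := fun w => g (I * w) * cexp (-B * w)) (C := 1) (z := (y : ℂ)) ?_ ?_ ?_ ?_ (by simpa using hy)
    · apply Differentiable.diffContOnCl
      fun_prop
    · refine ⟨1, by norm_num, 2 * B, ?_⟩
      refine Asymptotics.IsBigO.of_bound C (Filter.Eventually.of_forall fun z => ?_)
      rw [norm_mul, Complex.norm_exp, Real.norm_eq_abs, Real.abs_exp]
      have h1 := hgr (I * z)
      have h2 : Real.exp ((-(B : ℂ) * z).re) ≤ Real.exp (B * ‖z‖) := by
        apply Real.exp_le_exp.2
        have := Complex.abs_re_le_norm z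
        have := neg_le_abs z.re
        simp
        nlinarith
      have h3 : ‖I * z‖ = ‖z‖ := by simp
      rw [h3] at h1
      calc _ ≤ (C * Real.exp (B * ‖z‖)) * Real.exp (B * ‖z‖) := by gcongr
        _ = C * Real.exp (2 * B * ‖z‖ ^ (1:ℝ)) := by
          rw [mul_assoc, ← Real.exp_add, Real.rpow_one]; ring_nf
    · refine ⟨C, ?_⟩
      rw [Filter.eventually_map]
      filter_upwards [Filter.eventually_ge_atTop 0] with x hx
      rw [norm_mul, Complex.norm_exp]
      have h1 := hgr (I * x)
      have h3 : ‖I * (x : ℂ)‖ = x := by simp [abs_of_nonneg hx]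
      rw [h3] at h1
      have h4 : (-(B : ℂ) * x).re = -(B * x) := by simp
      rw [h4]
      calc _ ≤ (C * Real.exp (B * x)) * Real.exp (-(B * x)) := by gcongr
        _ = C := by rw [mul_assoc, ← Real.exp_add]; simp
    · intro x
      rw [norm_mul, Complex.norm_exp]
      have h4 : (-(B : ℂ) * (x * I)).re = 0 := by simp
      have h5 : I * (x * I) = ((-x : ℝ) : ℂ) := by
        push_cast; linear_combination (x : ℂ) * I_mul_I
      rw [h4, h5]
      simpa using hb (-x)
  rw [norm_mul, Complex.norm_exp] at key
  have h4 : (-(B : ℂ) * y).re = -(B * y) := by simp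
  rw [h4, Real.exp_neg] at key
  have := Real.exp_pos (B * y)
  field_simp at key
  linarith

theorem cheb_bound (n : ℕ) (w : ℂ) :
    ‖(Polynomial.Chebyshev.T ℂ n).eval w‖ ≤ (2 * ‖w‖ + 1) ^ n := by
  have hw := norm_nonneg w
  induction n using Nat.strong_induction_on with
  | _ n ih =>
    match n with
    | 0 => simp
    | 1 => simp; linarith
    | k + 2 =>
      have h1 := ih (k + 1) (by omega)
      have h0 := ih k (by omega)
      push_cast at h1 h0 ⊢
      rw [Polynomial.Chebyshev.T_add_two]
      simp only [Polynomial.eval_sub, Polynomial.eval_mul, Polynomial.eval_X, Polynomial.eval_ofNat]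
      refine (norm_sub_le _ _).trans ?_
      rw [norm_mul, norm_mul]
      simp only [Complex.norm_ofNat]
      have : (2 * ‖w‖ + 1) ^ k ≤ (2 * ‖w‖ + 1) ^ (k + 1) :=
        pow_le_pow_right₀ (by linarith) (by omega)
      calc _ ≤ 2 * ‖w‖ * (2 * ‖w‖ + 1) ^ (k + 1) + (2 * ‖w‖ + 1) ^ (k + 1) := by
            gcongr; linarith
        _ = _ := by ring

open Complex in
theorem bern_sinh (h : ℂ → ℂ) (hd : Differentiable ℂ h) (C B : ℝ)
    (hgr : ∀ z, ‖h z‖ ≤ C * Real.exp (B * ‖z‖)) (hB : 0 ≤ B)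
    (hreal : ∀ x : ℝ, ∃ r : ℝ, h x = r ∧ |r| ≤ 1)
    (y : ℝ) (hy : 0 ≤ y) (s : ℝ) (hs : h (I * y) = I * s) : |s| ≤ Real.sinh (B * y) := by
  have hC : 0 ≤ C := by
    have := (norm_nonneg _).trans (hgr 0)
    simpa using this
  obtain ⟨θ, rfl⟩ : ∃ θ, s = Real.sinh θ := ⟨Real.arsinh s, (Real.sinh_arsinh s).symm⟩
  rw [Real.abs_sinh]
  apply Real.sinh_le_sinh.2
  have key : ∀ m : ℕ, Real.cosh (2 * m * θ) ≤ Real.exp (2 * m * (B * y)) := by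
    intro m
    have := bern_PL_s18 (fun z => (Polynomial.Chebyshev.T ℂ (2 * m : ℕ)).eval (h z)) (by fun_prop)
      ((2 * C + 1) ^ (2 * m)) (2 * m * B) ?_ ?_ (by positivity) y hy
    · rw [hs] at this
      have e1 : I * (Real.sinh θ : ℂ) = cos (Real.pi / 2 - θ * I) := by
        rw [Complex.cos_pi_div_two_sub, Complex.sin_mul_I]; push_cast; ring
      rw [e1, Polynomial.Chebyshev.T_complex_cos] at this
      have e2 : ((2 * m : ℕ) : ℤ) * (Real.pi / 2 - θ * I) = m * Real.pi - ((2 * m * θ : ℝ) : ℂ) * I := by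
        push_cast; ring
      have e3 : ‖cos (m * Real.pi - ((2 * m * θ : ℝ) : ℂ) * I)‖ = Real.cosh (2 * m * θ) := by
        have : cos (m * Real.pi - ((2 * m * θ : ℝ) : ℂ) * I)
          = (-1) ^ m * cos (((2 * m * θ : ℝ) : ℂ) * I) := by
          have c1 : cos ((m : ℂ) * Real.pi) = (-1) ^ m := by
            have := congrArg (fun x : ℝ => (x : ℂ)) (Real.cos_nat_mul_pi m)
            push_cast at this
            exact this
          rw [Complex.cos_sub, c1, Complex.sin_nat_mul_pi]; ring
        rw [this, Complex.cos_mul_I, ← Complex.ofReal_cosh]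
        simp only [norm_mul, norm_pow, norm_neg, norm_one, one_pow, one_mul, Complex.norm_real]
        exact abs_of_pos (Real.cosh_pos _)
      have e2' : (((2 * m : ℕ) : ℤ) : ℂ) * (Real.pi / 2 - θ * I) = m * Real.pi - ((2 * m * θ : ℝ) : ℂ) * I := by
        push_cast; ring
      rw [e2', e3] at this
      rwa [mul_assoc _ B y] at this
    · intro z
      refine (cheb_bound _ _).trans ?_
      have h1 : 2 * ‖h z‖ + 1 ≤ (2 * C + 1) * Real.exp (B * ‖z‖) := by
        have := hgr z
        have : 1 ≤ Real.exp (B * ‖z‖) := Real.one_le_exp (by positivity)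
        linarith
      calc _ ≤ ((2 * C + 1) * Real.exp (B * ‖z‖)) ^ (2 * m) := by gcongr
        _ = _ := by
          rw [mul_pow, ← Real.exp_nat_mul]; push_cast; ring_nf
    · intro x
      obtain ⟨r, hr, hr1⟩ := hreal x
      have : (r : ℂ) = cos (Real.arccos r : ℝ) := by
        rw [← Complex.ofReal_cos, Real.cos_arccos (abs_le.1 hr1).1 (abs_le.1 hr1).2]
      show ‖Polynomial.eval (h x) _‖ ≤ 1
      rw [hr, this, Polynomial.Chebyshev.T_complex_cos]
      have e : (((2 * m : ℕ) : ℤ) : ℂ) * (Real.arccos r : ℝ) = ((2 * m * Real.arccos r : ℝ) : ℂ) := by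
        push_cast; ring
      rw [e, ← Complex.ofReal_cos, Complex.norm_real]
      exact Real.abs_cos_le_one _
  by_contra! hlt
  set d := |θ| - B * y with hd'
  have hdpos : 0 < d := by linarith
  obtain ⟨m, hm⟩ := exists_nat_gt (1 / d)
  have k := key m
  rw [← Real.cosh_abs, Real.cosh_eq] at k
  have a1 : |2 * (m:ℝ) * θ| = 2 * m * |θ| := by
    rw [abs_mul, abs_of_nonneg (by positivity)]
  rw [a1] at k
  have a2 : Real.exp (2 * m * |θ|) ≤ 2 * Real.exp (2 * m * (B * y)) := by
    have := Real.exp_pos (-(2 * m * |θ|))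
    linarith
  have a3 : Real.exp (2 * m * |θ|) = Real.exp (2 * m * d) * Real.exp (2 * m * (B * y)) := by
    rw [← Real.exp_add]; congr 1; rw [hd']; ring
  rw [a3] at a2
  have a4 := le_of_mul_le_mul_right a2 (Real.exp_pos _)
  have a5 := Real.add_one_le_exp (2 * m * d)
  rw [div_lt_iff₀ hdpos] at hm
  linarith

open Complex in
theorem bern_sinh_deriv (h : ℂ → ℂ) (hd : Differentiable ℂ h) (C B : ℝ)
    (hgr : ∀ z, ‖h z‖ ≤ C * Real.exp (B * ‖z‖)) (hB : 0 ≤ B)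
    (hreal : ∀ x : ℝ, ∃ r : ℝ, h x = r ∧ |r| ≤ 1)
    (him : ∀ y : ℝ, ∃ s : ℝ, h (I * y) = I * s) : ‖deriv h 0‖ ≤ B := by
  have hh0 : h 0 = 0 := by
    obtain ⟨s, hs⟩ := him 0
    have := bern_sinh h hd C B hgr hB hreal 0 le_rfl s hs
    simp at this
    simpa [this] using hs
  have h1 : HasDerivAt (fun y : ℝ => h (I * y)) (deriv h 0 * I) 0 := by
    have a : HasDerivAt (fun y : ℂ => I * y) I ((0 : ℝ) : ℂ) := by
      simpa using (hasDerivAt_id ((0 : ℝ) : ℂ)).const_mul I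
    have b : HasDerivAt h (deriv h 0) (I * ((0 : ℝ) : ℂ)) := by
      simpa using (hd 0).hasDerivAt
    exact (b.comp _ a).comp_ofReal
  have h2 : HasDerivAt (fun y : ℝ => Real.sinh (B * y)) B 0 := by
    have a : HasDerivAt (fun y : ℝ => B * y) B 0 := by
      simpa using (hasDerivAt_id (0:ℝ)).const_mul B
    simpa using a.sinh
  have t1 := (hasDerivAt_iff_tendsto_slope.1 h1).norm
  have t2 := (hasDerivAt_iff_tendsto_slope.1 h2)
  have le : nhdsWithin (0:ℝ) (Set.Ioi 0) ≤ nhdsWithin 0 {0}ᶜ :=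
    nhdsWithin_mono _ (fun x hx => ne_of_gt hx)
  have := le_of_tendsto_of_tendsto (t1.mono_left le) (t2.mono_left le) ?_
  · simpa using this
  · filter_upwards [self_mem_nhdsWithin] with y hy
    have hy : 0 < y := hy
    obtain ⟨s, hs⟩ := him y
    have := bern_sinh h hd C B hgr hB hreal y hy.le s hs
    simp only [slope, vsub_eq_sub, sub_zero, hs]
    simp only [Complex.ofReal_zero, mul_zero, hh0, sub_zero, norm_smul, Real.sinh_zero, smul_eq_mul,
      norm_mul, norm_I, one_mul, Complex.norm_real, Real.norm_eq_abs, abs_inv, abs_of_pos hy]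
    gcongr

open Complex in
theorem bern_vec {E : Type*} [NormedAddCommGroup E] [NormedSpace ℂ E]
    (φ : ℂ → E) (hd : Differentiable ℂ φ) (σ M : ℝ) (hσ : 0 ≤ σ)
    (htype : ∀ ε > (0 : ℝ), ∃ C : ℝ, ∀ z, ‖φ z‖ ≤ C * Real.exp ((σ + ε) * ‖z‖))
    (hb : ∀ x : ℝ, ‖φ x‖ ≤ M) : ‖deriv φ 0‖ ≤ σ * M := by
  have hM : 0 ≤ M := (norm_nonneg _).trans (hb 0)
  obtain ⟨g, hg1, hg2⟩ := exists_dual_vector'' ℂ (deriv φ 0)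
  set r := ‖deriv φ 0‖ with hr
  set ψ : ℂ → ℂ := fun z => g (φ z) with hψ
  have hψn : ∀ z, ‖ψ z‖ ≤ ‖φ z‖ := fun z => by
    simpa using g.le_of_opNorm_le hg1 (φ z)
  have hψd : Differentiable ℂ ψ := g.differentiable.comp hd
  have hψ' : HasDerivAt ψ (r : ℂ) 0 := by
    have := g.hasFDerivAt.comp_hasDerivAt (0:ℂ) (hd 0).hasDerivAt
    rw [hg2] at this
    exact this
  have main : ∀ ε > (0:ℝ), r ≤ (σ + ε) * (M + ε) := by
    intro ε hε
    obtain ⟨C, hC⟩ := htype ε hε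
    have hMp : 0 < M + ε := by linarith
    set χ : ℂ → ℂ := fun z => ψ z - ψ (-z) with hχ
    have hχd : Differentiable ℂ χ := by
      intro z
      exact (hψd z).sub ((hψd (-z)).comp z differentiable_neg.differentiableAt)
    have hχ' : HasDerivAt χ (2 * r : ℂ) 0 := by
      have a : HasDerivAt ψ (r : ℂ) (-(0:ℂ)) := by simpa using hψ'
      have := hψ'.sub (a.comp (0:ℂ) (hasDerivAt_neg (0:ℂ)))
      have e : (2 * r : ℂ) = r - r * -1 := by ring
      rw [e]; exact this
    set h : ℂ → ℂ := fun z => (χ z + (starRingEnd ℂ) (χ ((starRingEnd ℂ) z))) / (4 * (M + ε) : ℝ) with hh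
    have hcd : Differentiable ℂ (fun z => (starRingEnd ℂ) (χ ((starRingEnd ℂ) z))) := by
      intro z
      have := (hχd ((starRingEnd ℂ) z)).conj_conj
      simpa [Function.comp_def] using this
    have hhd : Differentiable ℂ h := (hχd.add hcd).div_const _
    have hh' : HasDerivAt h ((r / (M + ε) : ℝ) : ℂ) 0 := by
      have : HasDerivAt (fun z => (starRingEnd ℂ) (χ ((starRingEnd ℂ) z))) ((starRingEnd ℂ) (2 * r : ℂ)) 0 := by
        simpa [Function.comp_def] using hχ'.conj_conj
      have := (hχ'.add this).div_const ((4 * (M + ε) : ℝ) : ℂ)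
      have hne : ((M : ℂ) + ε) ≠ 0 := by exact_mod_cast hMp.ne'
      have e : ((r / (M + ε) : ℝ) : ℂ)
          = (2 * r + (starRingEnd ℂ) (2 * r : ℂ)) / ((4 * (M + ε) : ℝ) : ℂ) := by
        rw [map_mul, Complex.conj_ofReal, Complex.conj_ofNat]
        push_cast
        field_simp
        ring
      rw [e]; exact this
    have hn : ∀ z, ‖h z‖ ≤ (‖ψ z‖ + ‖ψ (-z)‖ + ‖ψ ((starRingEnd ℂ) z)‖ + ‖ψ (-(starRingEnd ℂ) z)‖) / (4 * (M + ε)) := by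
      intro z
      simp only [hh, norm_div, Complex.norm_real, Real.norm_eq_abs]
      rw [abs_of_pos (by positivity)]
      gcongr
      refine (norm_add_le _ _).trans ?_
      rw [RCLike.norm_conj]
      have := norm_sub_le (ψ z) (ψ (-z))
      have := norm_sub_le (ψ ((starRingEnd ℂ) z)) (ψ (-(starRingEnd ℂ) z))
      simp only [hχ]
      linarith
    have hχodd : ∀ z, χ (-z) = - χ z := fun z => by simp [hχ]
    have hB := bern_sinh_deriv h hhd (C / (M + ε)) (σ + ε) ?_ (by linarith) ?_ ?_
    · rw [hh'.deriv, Complex.norm_real, Real.norm_eq_abs, abs_of_nonneg (by positivity)] at hB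
      rwa [div_le_iff₀ hMp] at hB
    · intro z
      refine (hn z).trans ?_
      have b1 := (hψn z).trans (hC z)
      have b2 := (hψn (-z)).trans (hC (-z))
      have b3 := (hψn ((starRingEnd ℂ) z)).trans (hC _)
      have b4 := (hψn (-(starRingEnd ℂ) z)).trans (hC _)
      simp only [norm_neg, RCLike.norm_conj] at b2 b3 b4
      rw [div_mul_eq_mul_div, div_le_div_iff₀ (by positivity) hMp]
      nlinarith
    · intro x
      have hx : h x = ((h x).re : ℂ) := by
        rw [eq_comm, ← Complex.conj_eq_iff_re]
        simp only [hh, map_div₀, map_add, Complex.conj_ofReal, Complex.conj_conj]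
        rw [add_comm]
      refine ⟨(h x).re, hx, ?_⟩
      refine (Complex.abs_re_le_norm _).trans ((hn _).trans ?_)
      have b1 := (hψn x).trans (hb x)
      have b2 := (hψn (-x)).trans (by simpa using hb (-x))
      rw [Complex.conj_ofReal, div_le_one (by positivity)]
      linarith
    · intro y
      have hx : (-I * h (I * y)) = ((-I * h (I * y)).re : ℂ) := by
        rw [eq_comm, ← Complex.conj_eq_iff_re]
        have e : (starRingEnd ℂ) (I * y) = -(I * y) := by simp
        simp only [hh, map_mul, map_neg, map_div₀, map_add, Complex.conj_ofReal, Complex.conj_conj, Complex.conj_I]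
        have e : -I * (y:ℂ) = -(I * y) := by ring
        rw [e, hχodd, map_neg]
        ring
      refine ⟨(-I * h (I * y)).re, ?_⟩
      · rw [← hx, ← mul_assoc]; simp
  have : Filter.Tendsto (fun ε : ℝ => (σ + ε) * (M + ε)) (nhdsWithin 0 (Set.Ioi 0)) (nhds (σ * M)) := by
    have : Continuous (fun ε : ℝ => (σ + ε) * (M + ε)) := by fun_prop
    exact (this.tendsto' 0 _ (by simp)).mono_left nhdsWithin_le_nhds
  exact ge_of_tendsto this (by filter_upwards [self_mem_nhdsWithin] with ε hε using main ε hε)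
theorem bern_cauchy {E : Type*} [NormedAddCommGroup E] [NormedSpace ℂ E]
    (φ : ℂ → E) (hd : Differentiable ℂ φ) (M : ℝ) (hM : ∀ z, ‖z‖ = 1 → ‖φ z‖ ≤ M) :
    ‖deriv φ 0‖ ≤ M := by
  have := Complex.norm_deriv_le_of_forall_mem_sphere_norm_le (c := 0) (R := 1) (f := φ) (C := M) one_pos
    hd.diffContOnCl (fun z hz => hM z (by simpa using hz))
  simpa using this

theorem vec_comp_ofReal {E : Type*} [NormedAddCommGroup E] [NormedSpace ℂ E] {φ : ℂ → E} {φ' : E}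
    {t : ℝ} (h : HasDerivAt φ φ' (t : ℂ)) : HasDerivAt (fun x : ℝ => φ x) φ' t := by
  have := h.scomp t (Complex.ofRealCLM.hasDerivAt (x := t))
  simpa [Function.comp_def] using this

section
variable {E G : Type*} [NormedAddCommGroup E] [NormedSpace ℂ E] [NormedAddCommGroup G]
  [NormedSpace ℂ G]

theorem line_deriv (F : E → G) (hF : Differentiable ℂ F) (B J : E) (z : ℂ) :
    HasDerivAt (fun w : ℂ => F (B + w • J)) (fderiv ℂ F (B + z • J) J) z := by
  have a : HasDerivAt (fun w : ℂ => B + w • J) J z := by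
    simpa using ((hasDerivAt_id z).smul_const J).const_add B
  exact (hF _).hasFDerivAt.comp_hasDerivAt z a

theorem op_bern1 (F : E → G) (hF : Differentiable ℂ F) (σ a : ℝ) (hσ : 0 ≤ σ)
    (hgr : ∀ τ > σ, ∃ C : ℝ, ∀ B, ‖F B‖ ≤ C * Real.exp (τ * ‖B‖))
    (P : E → Prop) (hadd : ∀ x y, P x → P y → P (x + y)) (hsm : ∀ (t : ℝ) x, P x → P ((t : ℂ) • x))
    (hb : ∀ B, P B → ‖F B‖ ≤ a) (B J : E) (hB : P B) (hJ : P J) :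
    ‖fderiv ℂ F B J‖ ≤ σ * a * ‖J‖ := by
  have h := line_deriv F hF B J 0
  have := bern_vec (fun w : ℂ => F (B + w • J)) (fun z => (line_deriv F hF B J z).differentiableAt)
    (σ * ‖J‖) a (by positivity) ?_ (fun x => hb _ (hadd _ _ hB (hsm _ _ hJ)))
  · rw [h.deriv] at this
    simp only [zero_smul, add_zero] at this
    linarith
  · intro ε hε
    have hτ : σ < σ + ε / (‖J‖ + 1) := by
      have : 0 < ε / (‖J‖ + 1) := by positivity
      linarith
    obtain ⟨C, hC⟩ := hgr _ hτ
    have hC0 : 0 ≤ C := by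
      have := (norm_nonneg _).trans (hC 0)
      simpa using this
    refine ⟨C * Real.exp ((σ + ε / (‖J‖ + 1)) * ‖B‖), fun z => (hC _).trans ?_⟩
    rw [mul_assoc, ← Real.exp_add]
    gcongr
    have h1 : ‖B + z • J‖ ≤ ‖B‖ + ‖z‖ * ‖J‖ := by
      simpa [norm_smul] using norm_add_le B (z • J)
    have h2 : (σ + ε / (‖J‖ + 1)) * ‖J‖ ≤ σ * ‖J‖ + ε := by
      have : ε / (‖J‖ + 1) * ‖J‖ ≤ ε := by
        rw [div_mul_eq_mul_div, div_le_iff₀ (by positivity)]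
        nlinarith [norm_nonneg J]
      linarith
    have h3 : 0 ≤ σ + ε / (‖J‖ + 1) := by linarith
    calc _ ≤ (σ + ε / (‖J‖ + 1)) * (‖B‖ + ‖z‖ * ‖J‖) := by gcongr
      _ = (σ + ε / (‖J‖ + 1)) * ‖B‖ + ((σ + ε / (‖J‖ + 1)) * ‖J‖) * ‖z‖ := by ring
      _ ≤ _ := by gcongr

theorem op_bern2 (F : E → G) (hF : ContDiff ℂ 2 F) (σ a : ℝ) (hσ : 0 ≤ σ)
    (hgr : ∀ τ > σ, ∃ C : ℝ, ∀ B, ‖F B‖ ≤ C * Real.exp (τ * ‖B‖))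
    (P : E → Prop) (hadd : ∀ x y, P x → P y → P (x + y)) (hsm : ∀ (t : ℝ) x, P x → P ((t : ℂ) • x))
    (hb : ∀ B, P B → ‖F B‖ ≤ a) (B J K : E) (hB : P B) (hJ : P J) (hK : P K) :
    ‖fderiv ℂ F (B + K) J - fderiv ℂ F B J‖ ≤ σ * (σ * a * ‖J‖) * ‖K‖ := by
  have hFd : Differentiable ℂ F := hF.differentiable (by norm_num)
  have hF' : Differentiable ℂ (fun X => fderiv ℂ F X J) := by
    have : Differentiable ℂ (fderiv ℂ F) :=
      (hF.fderiv_right (m := 1) (by norm_num)).differentiable (by norm_num)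
    intro X
    exact (this X).clm_apply (differentiableAt_const J)
  have hgr' : ∀ τ > σ, ∃ C : ℝ, ∀ B, ‖fderiv ℂ F B J‖ ≤ C * Real.exp (τ * ‖B‖) := by
    intro τ hτ
    obtain ⟨C, hC⟩ := hgr τ hτ
    have hC0 : 0 ≤ C := by
      have := (norm_nonneg _).trans (hC 0)
      simpa using this
    refine ⟨C * Real.exp (τ * ‖J‖), fun B => ?_⟩
    have h := line_deriv F hFd B J 0
    have := bern_cauchy (fun w : ℂ => F (B + w • J))
      (fun z => (line_deriv F hFd B J z).differentiableAt) (C * Real.exp (τ * ‖J‖) * Real.exp (τ * ‖B‖)) ?_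
    · rw [h.deriv] at this
      simpa using this
    · intro z hz
      refine (hC _).trans ?_
      rw [mul_assoc, ← Real.exp_add, ← mul_add]
      have h1 : ‖B + z • J‖ ≤ ‖J‖ + ‖B‖ := by
        have := norm_add_le B (z • J)
        rw [norm_smul, hz] at this
        linarith
      have : 0 ≤ τ := by linarith
      gcongr
  have hb' : ∀ B, P B → ‖fderiv ℂ F B J‖ ≤ σ * a * ‖J‖ := fun B hB =>
    op_bern1 F hFd σ a hσ hgr P hadd hsm hb B J hB hJ
  have key := fun X (hX : P X) => op_bern1 _ hF' σ _ hσ hgr' P hadd hsm hb' X K hX hK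
  have hder : ∀ t : ℝ, HasDerivAt (fun t : ℝ => fderiv ℂ F (B + (t : ℂ) • K) J)
      (fderiv ℂ (fun X => fderiv ℂ F X J) (B + (t : ℂ) • K) K) t := fun t =>
    vec_comp_ofReal (line_deriv _ hF' B K (t : ℂ))
  have := norm_image_sub_le_of_norm_deriv_le_segment_01'
    (fun t _ => (hder t).hasDerivWithinAt) (fun t _ => key _ (hadd _ _ hB (hsm t _ hK)))
  simpa using this

theorem op_bern3 (F : E → G) (hF : ContDiff ℂ 2 F) (σ a : ℝ) (hσ : 0 ≤ σ)
    (hgr : ∀ τ > σ, ∃ C : ℝ, ∀ B, ‖F B‖ ≤ C * Real.exp (τ * ‖B‖))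
    (P : E → Prop) (hadd : ∀ x y, P x → P y → P (x + y)) (hsm : ∀ (t : ℝ) x, P x → P ((t : ℂ) • x))
    (hb : ∀ B, P B → ‖F B‖ ≤ a) (A V W : E) (hA : P A) (hV : P V) (hW : P W) :
    ‖F (A + (V + W)) - F (A + V) - fderiv ℂ F A W‖ ≤ σ * σ * a * (‖V‖ + ‖W‖ / 2) * ‖W‖ ∧
    ‖F (A + (V + W)) - F (A + V) - fderiv ℂ F A W‖ ≤ 2 * σ * a * ‖W‖ := by
  have hFd : Differentiable ℂ F := hF.differentiable (by norm_num)
  have ha : 0 ≤ a := (norm_nonneg _).trans (hb A hA)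
  have hder : ∀ t : ℝ, HasDerivAt
      (fun t : ℝ => F (A + V + (t : ℂ) • W) - F (A + V) - (t : ℂ) • fderiv ℂ F A W)
      (fderiv ℂ F (A + V + (t : ℂ) • W) W - fderiv ℂ F A W) t := fun t => by
    have h1 := vec_comp_ofReal (line_deriv F hFd (A + V) W (t : ℂ))
    have h2 : HasDerivAt (fun t : ℝ => (t : ℂ) • fderiv ℂ F A W) (fderiv ℂ F A W) t := by
      have := vec_comp_ofReal ((hasDerivAt_id (t : ℂ)).smul_const (fderiv ℂ F A W))
      simpa using this
    exact (h1.sub_const _).sub h2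
  have e : F (A + (V + W)) - F (A + V) - fderiv ℂ F A W =
      (fun t : ℝ => F (A + V + (t : ℂ) • W) - F (A + V) - (t : ℂ) • fderiv ℂ F A W) 1 := by
    simp [add_assoc]
  have hc : ContinuousOn (fun t : ℝ => F (A + V + (t : ℂ) • W) - F (A + V) - (t : ℂ) • fderiv ℂ F A W)
    (Set.Icc 0 1) := fun t _ => (hder t).continuousAt.continuousWithinAt
  constructor
  · rw [e]
    have hBd : ∀ t : ℝ, HasDerivAt (fun t : ℝ => σ * σ * a * ‖W‖ * (t * ‖V‖ + t ^ 2 / 2 * ‖W‖))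
        (σ * σ * a * ‖W‖ * (‖V‖ + t * ‖W‖)) t := fun t => by
      have h1 : HasDerivAt (fun t : ℝ => t * ‖V‖) (‖V‖) t := by
        simpa using (hasDerivAt_id t).mul_const ‖V‖
      have h2 : HasDerivAt (fun t : ℝ => t ^ 2 / 2 * ‖W‖) (t * ‖W‖) t := by
        have := (((hasDerivAt_id t).pow 2).div_const 2).mul_const ‖W‖
        simpa using this
      exact (h1.add h2).const_mul _
    have := image_norm_le_of_norm_deriv_right_le_deriv_boundary hc
      (fun t _ => (hder t).hasDerivWithinAt) (B := fun t : ℝ => σ * σ * a * ‖W‖ * (t * ‖V‖ + t ^ 2 / 2 * ‖W‖))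
      (by simp) hBd ?_ (Set.right_mem_Icc.2 zero_le_one)
    · refine this.trans (le_of_eq ?_)
      ring
    · intro t ht
      have := op_bern2 F hF σ a hσ hgr P hadd hsm hb A W (V + (t : ℂ) • W) hA hW
        (hadd _ _ hV (hsm _ _ hW))
      rw [← add_assoc] at this
      refine this.trans ?_
      have h1 : ‖V + (t : ℂ) • W‖ ≤ ‖V‖ + t * ‖W‖ := by
        have := norm_add_le V ((t : ℂ) • W)
        rwa [norm_smul, Complex.norm_real, Real.norm_eq_abs, abs_of_nonneg ht.1] at this
      calc _ = σ * σ * a * ‖W‖ * ‖V + (t : ℂ) • W‖ := by ring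
        _ ≤ _ := by gcongr
  · rw [e]
    have := norm_image_sub_le_of_norm_deriv_le_segment_01' (C := 2 * σ * a * ‖W‖)
      (fun t _ => (hder t).hasDerivWithinAt) (fun t _ => ?_)
    · simpa using this
    · have h1 := op_bern1 F hFd σ a hσ hgr P hadd hsm hb A W hA hW
      have h2 := op_bern1 F hFd σ a hσ hgr P hadd hsm hb (A + V + (t : ℂ) • W) W
        (hadd _ _ (hadd _ _ hA hV) (hsm _ _ hW)) hW
      refine (norm_sub_le _ _).trans ?_
      linarith

end
noncomputable def cfk (g : ℂ → ℂ) (k : ℕ) : ℂ := (k.factorial : ℂ)⁻¹ * iteratedDeriv k g 0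

theorem cfk_bound (g : ℂ → ℂ) (hg : Differentiable ℂ g) (C τ : ℝ)
    (hgr : ∀ z, ‖g z‖ ≤ C * Real.exp (τ * ‖z‖)) (R : ℝ) (hR : 0 < R) (k : ℕ) :
    ‖cfk g k‖ * R ^ k ≤ C * Real.exp (τ * R) := by
  have := Complex.norm_iteratedDeriv_le_of_forall_mem_sphere_norm_le (c := 0) (R := R) (f := g)
    (C := C * Real.exp (τ * R)) k hR hg.diffContOnCl
    (fun z hz => by
      have hz : ‖z‖ = R := by simpa using hz
      rw [← hz]; exact hgr z)
  rw [cfk, norm_mul, norm_inv, Complex.norm_natCast]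
  have hk : (0:ℝ) < k.factorial := by positivity
  rw [le_div_iff₀ (by positivity)] at this
  rw [inv_mul_eq_div, div_mul_eq_mul_div, div_le_iff₀ hk]
  linarith

theorem cfk_sum (g : ℂ → ℂ) (hg : Differentiable ℂ g) (C τ : ℝ)
    (hgr : ∀ z, ‖g z‖ ≤ C * Real.exp (τ * ‖z‖)) (lam : ℝ) (hl : 1 < lam) (r : ℝ) (hr : 0 ≤ r) :
    Summable (fun k => ‖cfk g k‖ * r ^ k) ∧
    ∑' k, ‖cfk g k‖ * r ^ k ≤ C * Real.exp (τ * (lam * (r + 1))) * (1 - lam⁻¹)⁻¹ := by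
  have hl0 : 0 < lam := by linarith
  have hC : 0 ≤ C := by
    have := (norm_nonneg _).trans (hgr 0)
    simpa using this
  have hb : ∀ k, ‖cfk g k‖ * r ^ k ≤ C * Real.exp (τ * (lam * (r + 1))) * lam⁻¹ ^ k := by
    intro k
    have := cfk_bound g hg C τ hgr (lam * (r + 1)) (by positivity) k
    rw [inv_pow, ← div_eq_mul_inv, le_div_iff₀ (by positivity)]
    refine le_trans ?_ this
    rw [mul_pow, mul_assoc]
    have : r ^ k ≤ (r + 1) ^ k := by gcongr; linarith
    have h3 : 0 ≤ lam ^ k := by positivity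
    have : r ^ k * lam ^ k ≤ lam ^ k * (r + 1) ^ k := by nlinarith
    gcongr
  have hli : lam⁻¹ < 1 := inv_lt_one_of_one_lt₀ hl
  have hs : HasSum (fun k => C * Real.exp (τ * (lam * (r + 1))) * lam⁻¹ ^ k)
      (C * Real.exp (τ * (lam * (r + 1))) * (1 - lam⁻¹)⁻¹) :=
    (hasSum_geometric_of_lt_one (by positivity) hli).mul_left _
  have hsum : Summable (fun k => ‖cfk g k‖ * r ^ k) :=
    Summable.of_nonneg_of_le (fun k => by positivity) hb hs.summable
  exact ⟨hsum, (hsum.tsum_le_tsum hb hs.summable).trans hs.tsum_eq.le⟩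

section
variable {𝔸 : Type*} [NormedRing 𝔸] [NormedAlgebra ℂ 𝔸] [CompleteSpace 𝔸] [NormOneClass 𝔸]

noncomputable def opF (𝔸 : Type*) [NormedRing 𝔸] [NormedAlgebra ℂ 𝔸] (g : ℂ → ℂ) : 𝔸 → 𝔸 :=
  FormalMultilinearSeries.ofScalarsSum (cfk g)

theorem opF_eq (g : ℂ → ℂ) (B : 𝔸) : opF 𝔸 g B = ∑' k, cfk g k • B ^ k :=
  FormalMultilinearSeries.ofScalars_sum_eq (cfk g) B

theorem opF_contDiff (g : ℂ → ℂ) (hg : Differentiable ℂ g) (σ : ℝ) (hσ : 0 ≤ σ)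
    (htype : ∀ ε > (0 : ℝ), ∃ C > (0 : ℝ), ∀ z : ℂ, ‖g z‖ ≤ C * Real.exp ((σ + ε) * ‖z‖)) :
    ContDiff ℂ 2 (opF 𝔸 g) := by
  obtain ⟨C, _, hC⟩ := htype 1 one_pos
  have hrad : (FormalMultilinearSeries.ofScalars 𝔸 (cfk g)).radius = ⊤ := by
    refine FormalMultilinearSeries.radius_eq_top_of_summable_norm _ fun r => ?_
    simp_rw [FormalMultilinearSeries.ofScalars_norm]
    exact (cfk_sum g hg C (σ + 1) hC 2 (by norm_num) r r.2).1
  have h := (FormalMultilinearSeries.ofScalars 𝔸 (cfk g)).hasFPowerSeriesOnBall (by rw [hrad]; simp)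
  have h2 : AnalyticOnNhd ℂ (opF 𝔸 g) Set.univ := by
    intro x _
    exact h.analyticOnNhd x (by rw [hrad]; simp)
  exact h2.contDiff

theorem opF_growth (g : ℂ → ℂ) (hg : Differentiable ℂ g) (σ : ℝ) (hσ : 0 ≤ σ)
    (htype : ∀ ε > (0 : ℝ), ∃ C > (0 : ℝ), ∀ z : ℂ, ‖g z‖ ≤ C * Real.exp ((σ + ε) * ‖z‖)) :
    ∀ τ > σ, ∃ C : ℝ, ∀ B : 𝔸, ‖opF 𝔸 g B‖ ≤ C * Real.exp (τ * ‖B‖) := by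
  intro τ hτ
  set ε := (τ - σ) / 2 with hε
  have hεp : 0 < ε := by rw [hε]; linarith
  obtain ⟨C, hC0, hC⟩ := htype ε hεp
  have hp : 0 < σ + ε := by linarith
  set lam := τ / (σ + ε) with hlam
  have hl : 1 < lam := by rw [hlam, one_lt_div hp]; linarith
  have hlm : (σ + ε) * lam = τ := by rw [hlam]; field_simp
  refine ⟨C * Real.exp τ * (1 - lam⁻¹)⁻¹, fun B => ?_⟩
  obtain ⟨h1, h2⟩ := cfk_sum g hg C (σ + ε) hC lam hl ‖B‖ (norm_nonneg _)
  rw [opF_eq]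
  have hle : ∀ k, ‖cfk g k • B ^ k‖ ≤ ‖cfk g k‖ * ‖B‖ ^ k := fun k => by
    rw [norm_smul]; gcongr; exact norm_pow_le _ _
  refine (tsum_of_norm_bounded h1.hasSum hle).trans (h2.trans (le_of_eq ?_))
  have : (σ + ε) * (lam * (‖B‖ + 1)) = τ + τ * ‖B‖ := by rw [← mul_assoc, hlm]; ring
  rw [this, Real.exp_add]; ring
end

theorem opF_cfc {𝔸 : Type*} [CStarAlgebra 𝔸] [NormOneClass 𝔸] (g : ℂ → ℂ) (hg : Differentiable ℂ g) (σ : ℝ) (hσ : 0 ≤ σ)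
    (htype : ∀ ε > (0 : ℝ), ∃ C > (0 : ℝ), ∀ z : ℂ, ‖g z‖ ≤ C * Real.exp ((σ + ε) * ‖z‖))
    (B : 𝔸) (hB : IsSelfAdjoint B) : opF 𝔸 g B = cfc g B := by
  obtain ⟨C, _, hC⟩ := htype 1 one_pos
  have hs := (cfk_sum g hg C (σ + 1) hC 2 (by norm_num) ‖B‖ (norm_nonneg _)).1
  have hN : IsStarNormal B := hB.isStarNormal
  have hu := tendstoUniformlyOn_tsum (f := fun k (z : ℂ) => cfk g k * z ^ k) (s := spectrum ℂ B) hs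
    (fun k z hz => by
      rw [norm_mul, norm_pow]
      have := spectrum.norm_le_norm_of_mem hz
      gcongr)
  have hg' : (fun z => ∑' k, cfk g k * z ^ k) = g := by
    funext z
    have := Complex.hasSum_taylorSeries_of_entire hg 0 z
    rw [← this.tsum_eq]
    congr 1; funext k
    simp only [cfk, smul_eq_mul, sub_zero]; ring
  rw [hg'] at hu
  have t1 := tendsto_cfc_fun hu (Filter.Eventually.of_forall fun s => by fun_prop)
  have hsum : Summable (fun k => cfk g k • B ^ k) := by
    refine Summable.of_norm_bounded hs fun k => ?_
    rw [norm_smul]; gcongr; exact norm_pow_le _ _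
  rw [opF_eq]
  refine tendsto_nhds_unique hsum.hasSum (t1.congr fun s => ?_)
  have e : (fun x : ℂ => ∑ n ∈ s, cfk g n * x ^ n) = ∑ n ∈ s, fun x : ℂ => cfk g n * x ^ n := by
    funext x; simp
  rw [e, cfc_sum (fun k (z : ℂ) => cfk g k * z ^ k) B s (fun k _ => by fun_prop)]
  refine Finset.sum_congr rfl fun k _ => ?_
  rw [cfc_const_mul _ _ B (by fun_prop), cfc_pow_id (R := ℂ) B k]
theorem core_piece (x d s : ℝ) (hs1 : 1 < s) (hs2 : s ≤ 2) (hx : 0 < x) (hd : 0 ≤ d) (a w X : ℝ) (ha : 0 ≤ a)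
    (hw : 0 ≤ w)
    (h1 : X ≤ (2 * x) * (2 * x) * a * d * w) (h2 : X ≤ 2 * (2 * x) * a * w) :
    X ≤ 4 * (x ^ s * a) * d ^ (s - 1) * w := by
  have e : 4 * (x ^ s * a) * d ^ (s - 1) * w = 4 * x * a * w * (x * d) ^ (s - 1) := by
    have : x ^ s = x * x ^ (s - 1) := by
      rw [Real.rpow_sub_one hx.ne']; field_simp
    rw [this, Real.mul_rpow hx.le hd]; ring
  rw [e]
  have hq : 0 ≤ 4 * x * a * w := by positivity
  rcases le_total (x * d) 1 with h | h
  · have := Real.self_le_rpow_of_le_one (by positivity) h (by linarith : s - 1 ≤ 1)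
    calc X ≤ 4 * x * a * w * (x * d) := by linarith
      _ ≤ _ := by gcongr
  · have := Real.one_le_rpow h (by linarith : 0 ≤ s - 1)
    calc X ≤ 4 * x * a * w * 1 := by linarith
      _ ≤ _ := by gcongr

theorem core {𝔸 : Type*} [CStarAlgebra 𝔸] [NormOneClass 𝔸]
    (s : ℝ) (hs1 : 1 < s) (hs2 : s ≤ 2)
    (f : ℝ → ℝ)
    (fn : ℕ → ℂ → ℂ) (a : ℕ → ℝ)
    (hentire : ∀ n, Differentiable ℂ (fn n))
    (htype : ∀ n, ∀ ε > (0 : ℝ), ∃ C > (0 : ℝ), ∀ z : ℂ,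
      ‖fn n z‖ ≤ C * Real.exp (((2 : ℝ) ^ (n + 1) + ε) * ‖z‖))
    (hbound : ∀ n, ∀ x : ℝ, ‖fn n x‖ ≤ a n)
    (hdecomp : ∀ x : ℝ, (f x : ℂ) = ∑' n, fn n x)
    (hbesov : Summable fun n : ℕ => (2 : ℝ) ^ ((n : ℝ) * s) * a n)
    (A : 𝔸) (hA : IsSelfAdjoint A)
    (D : 𝔸 → 𝔸)
    (hD : ∀ V : 𝔸, IsSelfAdjoint V →
      HasDerivAt (fun t : ℝ => cfc f (A + (t : ℂ) • V)) (D V) 0) 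
    (V V' : 𝔸) (hV : IsSelfAdjoint V) (hV' : IsSelfAdjoint V') :
      ‖(cfc f (A + V') - cfc f A - D V') - (cfc f (A + V) - cfc f A - D V)‖
          ≤ 4 * (∑' n : ℕ, (2 : ℝ) ^ ((n : ℝ) * s) * a n)
              * (min ‖V‖ ‖V'‖ + ‖V' - V‖ / 2) ^ (s - 1) * ‖V' - V‖ := by
  have ha : ∀ n, 0 ≤ a n := fun n => (norm_nonneg _).trans (hbound n 0)
  have hpow : ∀ n : ℕ, (2 : ℝ) ^ n ≤ (2 : ℝ) ^ ((n : ℝ) * s) := fun n => by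
    rw [← Real.rpow_natCast]
    apply Real.rpow_le_rpow_of_exponent_le (by norm_num)
    have : (0:ℝ) ≤ n := by positivity
    nlinarith
  have hσa : Summable fun n : ℕ => (2:ℝ) ^ (n + 1) * a n := by
    refine Summable.of_nonneg_of_le (fun n => mul_nonneg (by positivity) (ha n)) (fun n => ?_)
      (hbesov.mul_left 2)
    rw [pow_succ]
    nlinarith [hpow n, ha n]
  have hsa : Summable a := by
    refine Summable.of_nonneg_of_le ha (fun n => ?_) hσa
    have : (1:ℝ) ≤ 2 ^ (n + 1) := one_le_pow₀ (by norm_num)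
    nlinarith [ha n]
  have hsp : ∀ B : 𝔸, IsSelfAdjoint B → ∀ z ∈ spectrum ℂ B, z = (z.re : ℂ) := fun B hB z hz =>
    hB.mem_spectrum_eq_re hz
  set F : ℕ → 𝔸 → 𝔸 := fun n => opF 𝔸 (fn n) with hF
  have hFc : ∀ n B, IsSelfAdjoint B → F n B = cfc (fn n) B := fun n B hB =>
    opF_cfc (fn n) (hentire n) _ (by positivity) (htype n) B hB
  have hFb : ∀ n B, IsSelfAdjoint B → ‖F n B‖ ≤ a n := fun n B hB => by
    rw [hFc n B hB]
    refine norm_cfc_le (ha n) fun z hz => ?_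
    rw [hsp B hB z hz]
    exact hbound n _
  have hFs : ∀ B, IsSelfAdjoint B → HasSum (fun n => F n B) (cfc f B) := fun B hB => by
    have hN : IsStarNormal B := hB.isStarNormal
    have hu := tendstoUniformlyOn_tsum (f := fun n (z : ℂ) => fn n z) (s := spectrum ℂ B) hsa
      (fun n z hz => by rw [hsp B hB z hz]; exact hbound n _)
    have t1 := tendsto_cfc_fun hu (Filter.Eventually.of_forall fun s =>
      continuousOn_finsetSum _ fun n _ => (hentire n).continuous.continuousOn)
    have e1 : cfc (fun z : ℂ => ∑' n, fn n z) B = cfc f B := by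
      rw [cfc_real_eq_complex f hB]
      refine cfc_congr fun z hz => ?_
      have := hsp B hB z hz
      show ∑' n, fn n z = ((f z.re : ℝ) : ℂ)
      rw [hdecomp, ← this]
    rw [e1] at t1
    refine t1.congr fun s => ?_
    have e : (fun x : ℂ => ∑ n ∈ s, fn n x) = ∑ n ∈ s, fun x : ℂ => fn n x := by
      funext x; simp
    rw [e, cfc_sum (fun n (z : ℂ) => fn n z) B s (fun n _ => (hentire n).continuous.continuousOn)]
    exact Finset.sum_congr rfl fun n _ => (hFc n B hB).symm
  have hcd : ∀ n, ContDiff ℂ 2 (F n) := fun n =>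
    opF_contDiff (fn n) (hentire n) _ (by positivity) (htype n)
  have hgr := fun n => opF_growth (𝔸 := 𝔸) (fn n) (hentire n) _ (by positivity) (htype n)
  have hadd : ∀ x y : 𝔸, IsSelfAdjoint x → IsSelfAdjoint y → IsSelfAdjoint (x + y) :=
    fun x y hx hy => hx.add hy
  have hsm : ∀ (t : ℝ) (x : 𝔸), IsSelfAdjoint x → IsSelfAdjoint ((t : ℂ) • x) := fun t x hx => by
    rw [isSelfAdjoint_iff, star_smul, hx.star_eq]; simp
  have hDs : ∀ V, IsSelfAdjoint V → HasSum (fun n => fderiv ℂ (F n) A V) (D V) := fun V hV => by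
    have hb1 := fun n B hB => op_bern1 (F n) ((hcd n).differentiable (by norm_num)) _ (a n) (by positivity)
      (hgr n) IsSelfAdjoint hadd hsm (hFb n) B V hB hV
    have h1 := hasDerivAt_tsum (𝕜 := ℝ) (u := fun n => (2:ℝ) ^ (n + 1) * a n * ‖V‖)
      (g := fun n t => F n (A + (t : ℂ) • V)) (g' := fun n t => fderiv ℂ (F n) (A + (t : ℂ) • V) V)
      (hσa.mul_right _)
      (fun n t => vec_comp_ofReal (line_deriv (F n) ((hcd n).differentiable (by norm_num)) A V t))
      (fun n t => hb1 n _ (hadd _ _ hA (hsm _ _ hV))) (y₀ := 0)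
      (hFs _ (hadd _ _ hA (hsm _ _ hV))).summable 0
    have e : (fun t : ℝ => ∑' n, F n (A + (t : ℂ) • V)) = fun t : ℝ => cfc f (A + (t : ℂ) • V) := by
      funext t
      exact (hFs _ (hadd _ _ hA (hsm _ _ hV))).tsum_eq
    rw [e] at h1
    have h2 := h1.unique (hD V hV)
    simp only [Complex.ofReal_zero, zero_smul, add_zero] at h2
    rw [← h2]
    exact (Summable.of_norm_bounded (hσa.mul_right ‖V‖) (fun n => hb1 n A hA)).hasSum
  have hsum : HasSum (fun n => F n (A + V') - F n (A + V) - fderiv ℂ (F n) A (V' - V))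
      ((cfc f (A + V') - cfc f A - D V') - (cfc f (A + V) - cfc f A - D V)) := by
    have := ((hFs _ (hA.add hV')).sub (hFs _ (hA.add hV))).sub ((hDs V' hV').sub (hDs V hV))
    have e : (cfc f (A + V') - cfc f A - D V') - (cfc f (A + V) - cfc f A - D V)
      = cfc f (A + V') - cfc f (A + V) - (D V' - D V) := by abel
    rw [e]
    simpa only [map_sub] using this
  rw [← hsum.tsum_eq]
  refine tsum_of_norm_bounded (((hbesov.hasSum.mul_left 4).mul_right _).mul_right _) fun n => ?_
  have hx : (2 : ℝ) ^ ((n : ℝ) * s) = ((2:ℝ) ^ n) ^ s := by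
    rw [Real.rpow_mul (by norm_num), Real.rpow_natCast]
  rw [hx]
  have p1 := op_bern3 (F n) (hcd n) _ (a n) (by positivity) (hgr n) IsSelfAdjoint hadd hsm (hFb n)
    A V (V' - V) hA hV (hV'.sub hV)
  have p2 := op_bern3 (F n) (hcd n) _ (a n) (by positivity) (hgr n) IsSelfAdjoint hadd hsm (hFb n)
    A V' (V - V') hA hV' (hV.sub hV')
  rw [add_sub_cancel] at p1 p2
  have e2 : F n (A + V) - F n (A + V') - fderiv ℂ (F n) A (V - V')
    = -(F n (A + V') - F n (A + V) - fderiv ℂ (F n) A (V' - V)) := by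
    rw [map_sub, map_sub]; abel
  rw [e2, norm_neg, norm_sub_rev V V'] at p2
  rw [pow_succ'] at p1 p2
  refine core_piece ((2:ℝ) ^ n) _ s hs1 hs2 (by positivity) (by positivity) (a n) _ _ (ha n) (norm_nonneg _) ?_ p1.2
  rcases min_choice ‖V‖ ‖V'‖ with h | h
  · rw [h]; exact p1.1
  · rw [h]; exact p2.1

/-- Suppose `f ∈ B^s_{∞,1}(ℝ)` for some `s ∈ (1,2]`, given through its
Littlewood–Paley decomposition `f = ∑_{n≥0} f_n` (each `f_n` a bounded entire function of
exponential type `2^{n+1}` with `‖f_n‖_{L∞(ℝ)} ≤ a n`, and Besov norm `∑ 2^{ns} a n < ∞`).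
Let `D` be the derivative of the operator function `A ↦ f(A)` at a bounded self-adjoint
`A` (so that `S_f(A;V) := f(A+V) − f(A) − D(V)` is the first-order Taylor remainder).
Then for all bounded self-adjoint `V, V'`:
`‖S_f(A;V') − S_f(A;V)‖ ≤ 4·‖f‖_{B^s}·δ(V,V')^{s−1}·‖V'−V‖` with
`δ(V,V') = min(‖V‖,‖V'‖) + ‖V'−V‖/2`, and in particular (taking `V = 0`)
`‖S_f(A;V')‖ ≤ 2^{3−s}·‖f‖_{B^s}·‖V'‖^s`. -/
theorem stmt18 {H : Type*} [NormedAddCommGroup H] [InnerProductSpace ℂ H] [CompleteSpace H]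
    (s : ℝ) (hs1 : 1 < s) (hs2 : s ≤ 2)
    (f : ℝ → ℝ) (hf : Continuous f)
    (fn : ℕ → ℂ → ℂ) (a : ℕ → ℝ)
    (hentire : ∀ n, Differentiable ℂ (fn n))
    (htype : ∀ n, ∀ ε > (0 : ℝ), ∃ C > (0 : ℝ), ∀ z : ℂ,
      ‖fn n z‖ ≤ C * Real.exp (((2 : ℝ) ^ (n + 1) + ε) * ‖z‖))
    (hbound : ∀ n, ∀ x : ℝ, ‖fn n x‖ ≤ a n)
    (hdecomp : ∀ x : ℝ, (f x : ℂ) = ∑' n, fn n x)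
    (hbesov : Summable fun n : ℕ => (2 : ℝ) ^ ((n : ℝ) * s) * a n)
    (A : H →L[ℂ] H) (hA : IsSelfAdjoint A)
    (D : (H →L[ℂ] H) → (H →L[ℂ] H))
    (hD : ∀ V : H →L[ℂ] H, IsSelfAdjoint V →
      HasDerivAt (fun t : ℝ => cfc f (A + t • V)) (D V) 0) :
    ∀ V V' : H →L[ℂ] H, IsSelfAdjoint V → IsSelfAdjoint V' →
      ‖(cfc f (A + V') - cfc f A - D V') - (cfc f (A + V) - cfc f A - D V)‖
          ≤ 4 * (∑' n : ℕ, (2 : ℝ) ^ ((n : ℝ) * s) * a n)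
              * (min ‖V‖ ‖V'‖ + ‖V' - V‖ / 2) ^ (s - 1) * ‖V' - V‖
      ∧ ‖cfc f (A + V') - cfc f A - D V'‖
          ≤ 2 ^ (3 - s) * (∑' n : ℕ, (2 : ℝ) ^ ((n : ℝ) * s) * a n) * ‖V'‖ ^ s := by
  have first : ∀ V V' : H →L[ℂ] H, IsSelfAdjoint V → IsSelfAdjoint V' →
      ‖(cfc f (A + V') - cfc f A - D V') - (cfc f (A + V) - cfc f A - D V)‖
          ≤ 4 * (∑' n : ℕ, (2 : ℝ) ^ ((n : ℝ) * s) * a n)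
              * (min ‖V‖ ‖V'‖ + ‖V' - V‖ / 2) ^ (s - 1) * ‖V' - V‖ := by
    intro V V' hV hV'
    rcases subsingleton_or_nontrivial H with hH | hH
    · have : ∀ X : H →L[ℂ] H, X = 0 := fun X => by ext x; exact Subsingleton.elim _ _
      rw [this V, this V', this (_ - _)]
      simp
    · exact core s hs1 hs2 f fn a hentire htype hbound hdecomp hbesov A hA D
        (fun V hV => by
          have h := hD V hV
          have e : (fun t : ℝ => cfc f (A + (t : ℂ) • V)) = fun t : ℝ => cfc f (A + t • V) := by
            funext t
            have : (t : ℂ) • V = t • V := by ext x; simp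
            rw [this]
          rw [e]
          exact h) V V' hV hV'
  intro V V' hV hV'
  refine ⟨first V V' hV hV', ?_⟩
  have h0 : D 0 = 0 := by
    have h := hD 0 (IsSelfAdjoint.zero _)
    simp only [smul_zero, add_zero] at h
    exact h.unique (hasDerivAt_const _ _)
  have h1 := first 0 V' (IsSelfAdjoint.zero _) hV'
  rw [h0] at h1
  simp only [add_zero, sub_self, sub_zero, norm_zero] at h1
  rw [min_eq_left (norm_nonneg _), zero_add] at h1
  refine h1.trans (le_of_eq ?_)
  generalize (∑' n : ℕ, (2 : ℝ) ^ ((n : ℝ) * s) * a n) = S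
  rcases (norm_nonneg V').eq_or_lt with h | h
  · rw [← h]; simp [Real.zero_rpow (by linarith : s ≠ 0)]
  · rw [Real.div_rpow h.le (by norm_num), Real.rpow_sub_one h.ne', Real.rpow_sub_one (by norm_num),
      Real.rpow_sub (by norm_num)]
    have : (2:ℝ) ^ s ≠ 0 := by positivity
    have e3 : (2:ℝ) ^ (3:ℝ) = 8 := by norm_num
    rw [e3]
    field_simp
    ring
end
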